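/- arXiv:2103.04587 — 4 statements merged into one kernel-verified Lean document; each statement's English description precedes it below -/
import Mathlib

section
/- Fix real numbers λ₁ < λ₂ < … < λ_m and let Λ = diag(λ₁,…,λ_m). For each n ∈ ℕ let A_n be a real symmetric m×m matrix with spectrum {λ₁,…,λ_m}, and let U_n be a real orthogonal m×m matrix with nonnegative diagonal entries satisfying U_nᵀ A_n U_n = Λ. If A_n → Λ as n → ∞, then U_n → I_m as n → ∞. -/
open Matrix Filter

/-- `A ∈ S(G)`: real symmetric matrix whose off-diagonal zero pattern is given by `G`. -/
def inS {V : Type*} (G : SimpleGraph V) (A : Matrix V V ℝ) : Prop :=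
  A.IsSymm ∧ ∀ i j : V, i ≠ j → (A i j ≠ 0 ↔ G.Adj i j)

/-- The spectrum of a matrix, as the multiset of roots of its characteristic polynomial. -/
noncomputable def specMultiset {V : Type*} [Fintype V] [DecidableEq V]
    (A : Matrix V V ℝ) : Multiset ℝ :=
  A.charpoly.roots

/-- The number of distinct eigenvalues of a matrix. -/
noncomputable def qMat {V : Type*} [Fintype V] [DecidableEq V] (A : Matrix V V ℝ) : ℕ :=
  (specMultiset A).toFinset.card

/-- `q(G)`: the minimum number of distinct eigenvalues over matrices in `S(G)`. -/
noncomputable def qGraph {V : Type*} [Fintype V] [DecidableEq V] (G : SimpleGraph V) : ℕ :=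
  sInf {q | ∃ A : Matrix V V ℝ, inS G A ∧ qMat A = q}

/-- The strong spectral property. -/
def HasSSP {V : Type*} [Fintype V] [DecidableEq V] (A : Matrix V V ℝ) : Prop :=
  ∀ X : Matrix V V ℝ, X.IsSymm → A * X = X * A →
    Matrix.hadamard A X = 0 → Matrix.hadamard (1 : Matrix V V ℝ) X = 0 → X = 0

/-- Generic realisability of a multiset of eigenvalues for a graph. -/
def GenericallyRealisable {V : Type*} [Fintype V] [DecidableEq V]
    (G : SimpleGraph V) (σ : Multiset ℝ) : Prop :=
  ∀ Y : Finset (V → ℝ), (∀ y ∈ Y, y ≠ 0) →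
    ∃ (d : V → ℝ) (U : Matrix V V ℝ),
      Multiset.map d Finset.univ.val = σ ∧ Uᵀ * U = 1 ∧
      inS G (U * Matrix.diagonal d * Uᵀ) ∧
      ∀ y ∈ Y, ∀ i, U.mulVec y i ≠ 0

/-- The partial join `(G₁, X) ∨ G₂`: the disjoint union of `G₁` and `G₂` together with all
edges joining vertices of `X ⊆ V(G₁)` to vertices of `G₂`. -/
def partialJoin {α β : Type*} (G₁ : SimpleGraph α) (X : Set α) (G₂ : SimpleGraph β) :
    SimpleGraph (α ⊕ β) where
  Adj x y :=
    (∃ a b, G₁.Adj a b ∧ x = Sum.inl a ∧ y = Sum.inl b) ∨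
    (∃ a b, G₂.Adj a b ∧ x = Sum.inr a ∧ y = Sum.inr b) ∨
    (∃ a ∈ X, ∃ b, x = Sum.inl a ∧ y = Sum.inr b) ∨
    (∃ a ∈ X, ∃ b, x = Sum.inr b ∧ y = Sum.inl a)
  symm := by
    constructor
    rintro x y (⟨a, b, hab, rfl, rfl⟩ | ⟨a, b, hab, rfl, rfl⟩ | ⟨a, ha, b, rfl, rfl⟩ |
      ⟨a, ha, b, rfl, rfl⟩)
    · exact Or.inl ⟨b, a, hab.symm, rfl, rfl⟩
    · exact Or.inr (Or.inl ⟨b, a, hab.symm, rfl, rfl⟩)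
    · exact Or.inr (Or.inr (Or.inr ⟨a, ha, b, rfl, rfl⟩))
    · exact Or.inr (Or.inr (Or.inl ⟨a, ha, b, rfl, rfl⟩))
  loopless := by
    constructor
    rintro x (⟨a, b, hab, rfl, h⟩ | ⟨a, b, hab, rfl, h⟩ | ⟨a, ha, b, rfl, h⟩ | ⟨a, ha, b, rfl, h⟩)
    · cases h; exact hab.ne rfl
    · cases h; exact hab.ne rfl
    · exact (Sum.inl_ne_inr h).elim
    · exact (Sum.inr_ne_inl h).elim

/-- The join `G₁ ∨ G₂` of two graphs. -/
def graphJoin {α β : Type*} (G₁ : SimpleGraph α) (G₂ : SimpleGraph β) : SimpleGraph (α ⊕ β) :=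
  partialJoin G₁ Set.univ G₂

/-- The disjoint union of a family of graphs. -/
def sigmaGraph {ι : Type*} {α : ι → Type*} (G : ∀ i, SimpleGraph (α i)) :
    SimpleGraph (Σ i, α i) where
  Adj x y := ∃ (i : ι) (a b : α i), (G i).Adj a b ∧ x = ⟨i, a⟩ ∧ y = ⟨i, b⟩
  symm := by
    constructor
    rintro x y ⟨i, a, b, hab, rfl, rfl⟩
    exact ⟨i, b, a, hab.symm, rfl, rfl⟩
  loopless := by
    constructor
    rintro x ⟨i, a, b, hab, rfl, h⟩
    obtain rfl : a = b := by simpa using h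
    exact hab.ne rfl

/-- Lemma 2.2: if `A_n ∈ 𝓔_Λ` with `A_n → Λ` and `U_n` orthogonal with
nonnegative diagonal and `U_nᵀ A_n U_n = Λ`, then `U_n → I`. -/
theorem statement1 (m : ℕ) (lam : Fin m → ℝ) (hlam : StrictMono lam)
    (A U : ℕ → Matrix (Fin m) (Fin m) ℝ)
    (hAsymm : ∀ n, (A n).IsSymm)
    (hAspec : ∀ n, specMultiset (A n) = Finset.univ.val.map lam)
    (hUorth : ∀ n, (U n)ᵀ * U n = 1)
    (hUdiag : ∀ n, ∀ i, 0 ≤ U n i i)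
    (hUA : ∀ n, (U n)ᵀ * A n * U n = Matrix.diagonal lam)
    (hA : Tendsto A atTop (nhds (Matrix.diagonal lam))) :
    Tendsto U atTop (nhds 1) := by
  -- column normalisation
  have hcol : ∀ n j, ∑ k, U n k j * U n k j = 1 := by
    intro n j
    have h := congrFun (congrFun (hUorth n) j) j
    simpa [Matrix.mul_apply] using h
  have hbd : ∀ n k j, |U n k j| ≤ 1 := by
    intro n k j
    rw [abs_le_one_iff_mul_self_le_one, ← hcol n j]
    exact Finset.single_le_sum (f := fun k => U n k j * U n k j)
      (fun i _ => mul_self_nonneg _) (Finset.mem_univ k)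
  have hAU : ∀ n, A n * U n = U n * Matrix.diagonal lam := by
    intro n
    have h : U n * (U n)ᵀ = 1 := mul_eq_one_comm.mp (hUorth n)
    rw [← hUA n, ← Matrix.mul_assoc, ← Matrix.mul_assoc, h, Matrix.one_mul]
  have hent : ∀ n i j, ∑ k, (A n i k - Matrix.diagonal lam i k) * U n k j
      = U n i j * (lam j - lam i) := by
    intro n i j
    have h := congrFun (congrFun (hAU n) i) j
    rw [Matrix.mul_diagonal, Matrix.mul_apply] at h
    have h2 : (Matrix.diagonal lam * U n) i j = lam i * U n i j := Matrix.diagonal_mul ..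
    rw [Matrix.mul_apply] at h2
    simp only [sub_mul, Finset.sum_sub_distrib]
    rw [h, h2]
    ring
  have hA' : ∀ i k, Tendsto (fun n => A n i k - Matrix.diagonal lam i k) atTop (nhds 0) := by
    intro i k
    have h := tendsto_pi_nhds.mp (tendsto_pi_nhds.mp hA i) k
    simpa using h.sub_const (Matrix.diagonal lam i k)
  have hoff : ∀ i j, i ≠ j → Tendsto (fun n => U n i j) atTop (nhds 0) := by
    intro i j hij
    have hne : lam j - lam i ≠ 0 := sub_ne_zero.mpr fun h => hij (hlam.injective h).symm
    have hs : Tendsto (fun n => ∑ k, (A n i k - Matrix.diagonal lam i k) * U n k j)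
        atTop (nhds 0) := by
      have h0 : (0 : ℝ) = ∑ _k : Fin m, (0 : ℝ) := by simp
      rw [h0]
      refine tendsto_finsetSum _ fun k _ => ?_
      refine squeeze_zero_norm (fun n => ?_) (by simpa using (hA' i k).norm)
      rw [norm_mul]
      exact mul_le_of_le_one_right (norm_nonneg _) (hbd n k j)
    have h2 := hs.div_const (lam j - lam i)
    rw [zero_div] at h2
    refine h2.congr fun n => ?_
    rw [hent n i j]
    field_simp
  have hdiag : ∀ i, Tendsto (fun n => U n i i) atTop (nhds 1) := by
    intro i
    have hs : Tendsto (fun n => ∑ k ∈ Finset.univ.erase i, U n k i * U n k i)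
        atTop (nhds 0) := by
      have h0 : (0 : ℝ) = ∑ _k ∈ (Finset.univ : Finset (Fin m)).erase i, (0 : ℝ) := by simp
      rw [h0]
      refine tendsto_finsetSum _ fun k hk => ?_
      have h := hoff k i (Finset.ne_of_mem_erase hk)
      simpa using h.mul h
    have h2 := (hs.const_sub 1).sqrt
    rw [sub_zero, Real.sqrt_one] at h2
    refine h2.congr fun n => ?_
    rw [← hcol n i, ← Finset.add_sum_erase _ _ (Finset.mem_univ i), add_sub_cancel_right]
    exact Real.sqrt_mul_self (hUdiag n i)
  refine tendsto_pi_nhds.mpr fun i => tendsto_pi_nhds.mpr fun j => ?_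
  by_cases hij : i = j
  · subst hij
    simpa using hdiag i
  · simpa [Matrix.one_apply_ne hij] using hoff i j hij
end

section
/- Let G be a connected simple graph on vertex set {1,…,m}, let λ₁ < λ₂ < … < λ_m be real numbers with Λ = diag(λ₁,…,λ_m), and let Y be a finite subset of ℝ^m ∖ {0}. Then there exist a real symmetric matrix A ∈ S(G) with spectrum {λ₁,…,λ_m} having the strong spectral property (SSP), and an orthogonal matrix U with Uᵀ A U = Λ, such that the vector U v is nowhere-zero for every v ∈ Y. -/
open Matrix Filter

theorem quad_deriv (c b a : ℝ) : HasDerivAt (fun s : ℝ => c + s * b + s ^ 2 * a) b 0 := by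
  have := (((hasDerivAt_id (0:ℝ)).mul_const b).const_add c).fun_add
    ((hasDerivAt_pow 2 (0:ℝ)).mul_const a)
  exact this.congr_deriv (by simp)

open Topology in
theorem perturb {m : ℕ} (lam : Fin m → ℝ) (hlam : Function.Injective lam)
    (A E U : Matrix (Fin m) (Fin m) ℝ) (hA : A.IsSymm) (hE : E.IsSymm)
    (hU : Uᵀ * U = 1) (hAU : A * U = U * Matrix.diagonal lam)
    (hdet : (Matrix.hadamard U U).det ≠ 0)
    (Q : ℝ × (Fin m → ℝ) × (Fin m → Fin m → ℝ) → Prop)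
    (hQ : ∀ᶠ x in 𝓝 ((0, 0, U) : ℝ × (Fin m → ℝ) × (Fin m → Fin m → ℝ)), Q x) :
    ∀ᶠ t in 𝓝 (0 : ℝ), ∃ (d : Fin m → ℝ) (V : Matrix (Fin m) (Fin m) ℝ),
      Vᵀ * V = 1 ∧ (A + t • E + Matrix.diagonal d) * V = V * Matrix.diagonal lam ∧
      Q (t, d, V) := by
  let Φ : ℝ × (Fin m → ℝ) × (Fin m → Fin m → ℝ) → ℝ × (Fin m → Fin m → ℝ) × (Fin m → ℝ) :=
    fun x => (x.1, fun i j => (∑ k, (A i k + x.1 * E i k) * x.2.2 k j) + x.2.1 i * x.2.2 i j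
      - x.2.2 i j * lam j, fun k => ∑ i, x.2.2 i k * x.2.2 i k)
  have hUc : ∀ k l, ∑ i, U i k * U i l = if k = l then 1 else 0 := by
    intro k l
    have := congrFun (congrFun hU k) l
    simpa [Matrix.mul_apply, Matrix.one_apply] using this
  have hAUc : ∀ i j, ∑ k, A i k * U k j = U i j * lam j := by
    intro i j
    have := congrFun (congrFun hAU i) j
    rw [Matrix.mul_diagonal, Matrix.mul_apply] at this
    exact this
  have hΦ0 : Φ (0, 0, U) = (0, 0, 1) := by
    simp only [Φ]
    refine Prod.ext rfl (Prod.ext ?_ ?_)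
    · funext i j
      simp [hAUc]
    · funext k
      simp [hUc]
  have hcd : ContDiff ℝ 1 Φ := by
    simp only [Φ]
    fun_prop
  have hstrict := hcd.contDiffAt (x := ((0, 0, U) : ℝ × (Fin m → ℝ) × (Fin m → Fin m → ℝ)))
    |>.hasStrictFDerivAt (by norm_num)
  set L := fderiv ℝ Φ (0, 0, U) with hL
  have hinj : Function.Injective L.toLinearMap := by
    rw [← LinearMap.ker_eq_bot, LinearMap.ker_eq_bot']
    rintro ⟨τ, δ, W⟩ h0
    have hline : HasDerivAt (fun s : ℝ =>
        ((0, 0, U) : ℝ × (Fin m → ℝ) × (Fin m → Fin m → ℝ)) + s • (τ, δ, W)) (τ, δ, W) 0 := by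
      simpa using ((hasDerivAt_id (0:ℝ)).smul_const
        ((τ, δ, W) : ℝ × (Fin m → ℝ) × (Fin m → Fin m → ℝ))).const_add
        ((0, 0, U) : ℝ × (Fin m → ℝ) × (Fin m → Fin m → ℝ))
    have hcomp := HasFDerivAt.comp_hasDerivAt_of_eq (0:ℝ) hstrict.hasFDerivAt hline (by simp)
    have hz : L (τ, δ, W) = 0 := h0
    rw [hz] at hcomp
    have hτ : τ = 0 := by
      have h1 := (hcomp.fst)
      have h2 : HasDerivAt (fun s : ℝ => s * τ) τ 0 := by
        simpa using (hasDerivAt_id (0:ℝ)).mul_const τ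
      refine h2.unique ?_
      refine h1.congr_of_eventuallyEq (Eventually.of_forall fun s => ?_)
      simp [Φ]
    subst hτ
    have h1 : ∀ i j, (∑ k, A i k * W k j) + δ i * U i j - W i j * lam j = 0 := by
      intro i j
      have h1 := (hasDerivAt_pi.1 (hasDerivAt_pi.1 (hcomp.snd.fst) i) j)
      refine (quad_deriv 0 ((∑ k, A i k * W k j) + δ i * U i j - W i j * lam j)
        (δ i * W i j)).unique ?_
      refine h1.congr_of_eventuallyEq (Eventually.of_forall fun s => ?_)
      change _ = (∑ k, (A i k + (0 + s * 0) * E i k) * (U k j + s * W k j))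
        + (0 + s * δ i) * (U i j + s * W i j) - (U i j + s * W i j) * lam j
      have : ∑ k, (A i k + (0 + s * 0) * E i k) * (U k j + s * W k j)
          = U i j * lam j + s * ∑ k, A i k * W k j := by
        rw [← hAUc, Finset.mul_sum, ← Finset.sum_add_distrib]
        exact Finset.sum_congr rfl fun _ _ => by ring
      rw [this]; ring
    have h2 : ∀ k, ∑ i, U i k * W i k = 0 := by
      intro k
      have h1 := (hasDerivAt_pi.1 (hcomp.snd.snd) k)
      have h3 : 2 * ∑ i, U i k * W i k = 0 := by
        refine (quad_deriv 1 (2 * ∑ i, U i k * W i k) (∑ i, W i k * W i k)).unique ?_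
        refine h1.congr_of_eventuallyEq (Eventually.of_forall fun s => ?_)
        have := hUc k k
        simp only [if_true] at this
        change 1 + s * (2 * ∑ i, U i k * W i k) + s ^ 2 * (∑ i, W i k * W i k)
          = ∑ i, (U i k + s * W i k) * (U i k + s * W i k)
        rw [← this, Finset.mul_sum, Finset.mul_sum, Finset.mul_sum, ← Finset.sum_add_distrib,
          ← Finset.sum_add_distrib]
        exact Finset.sum_congr rfl fun _ _ => by ring
      linarith
    let W' : Matrix (Fin m) (Fin m) ℝ := W
    have hmat : A * W' + Matrix.diagonal δ * U - W' * Matrix.diagonal lam = 0 := by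
      ext i j
      simpa [Matrix.mul_apply, Matrix.diagonal_mul, Matrix.mul_diagonal, Matrix.diagonal_apply]
        using h1 i j
    have hUA : Uᵀ * A = Matrix.diagonal lam * Uᵀ := by
      have := congrArg Matrix.transpose hAU
      simpa [Matrix.transpose_mul, hA.eq] using this
    have hmat2 : Matrix.diagonal lam * (Uᵀ * W') + Uᵀ * Matrix.diagonal δ * U
        - (Uᵀ * W') * Matrix.diagonal lam = 0 := by
      have := congrArg (fun M => Uᵀ * M) hmat
      simp only [Matrix.mul_sub, Matrix.mul_add, Matrix.mul_zero, ← Matrix.mul_assoc, hUA] at this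
      simpa only [← Matrix.mul_assoc] using this
    have hδ : δ = 0 := by
      have h3 : Matrix.mulVec (Matrix.hadamard U U)ᵀ δ = 0 := by
        funext k
        have := congrFun (congrFun hmat2 k) k
        simp only [Matrix.sub_apply, Matrix.add_apply, Matrix.diagonal_mul, Matrix.mul_diagonal,
          Matrix.zero_apply] at this
        have h4 : (Uᵀ * Matrix.diagonal δ * U) k k = 0 := by linarith
        rw [Matrix.mul_apply] at h4
        simp only [Matrix.mul_diagonal, Matrix.transpose_apply] at h4
        simp only [Matrix.mulVec, dotProduct, Matrix.transpose_apply, Matrix.hadamard_apply,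
          Pi.zero_apply]
        rw [← h4]
        exact Finset.sum_congr rfl fun _ _ => by ring
      by_contra hne
      exact hdet (by
        rw [← Matrix.det_transpose]
        exact Matrix.exists_mulVec_eq_zero_iff.1 ⟨δ, hne, h3⟩)
    subst hδ
    have hd0 : Matrix.diagonal (0 : Fin m → ℝ) = 0 := by
      ext i j
      simp [Matrix.diagonal_apply]
    rw [hd0, Matrix.mul_zero, Matrix.zero_mul, add_zero] at hmat2
    have hZ : Uᵀ * W' = 0 := by
      ext i j
      have := congrFun (congrFun hmat2 i) j
      simp only [Matrix.sub_apply, Matrix.diagonal_mul, Matrix.mul_diagonal,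
          Matrix.zero_apply] at this
      by_cases hij : i = j
      · subst hij
        simpa [Matrix.mul_apply] using h2 i
      · have h5 : (lam i - lam j) * (Uᵀ * W') i j = 0 := by linarith
        rcases mul_eq_zero.1 h5 with h | h
        · exact absurd (hlam (sub_eq_zero.1 h)) hij
        · simpa using h
    have hW : W' = 0 := by
      have hUU : U * Uᵀ = 1 := mul_eq_one_comm.1 hU
      calc W' = (U * Uᵀ) * W' := by rw [hUU, Matrix.one_mul]
        _ = 0 := by rw [Matrix.mul_assoc, hZ, Matrix.mul_zero]
    have : W = 0 := hW
    rw [this]; rfl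
  have hsurj : Function.Surjective L.toLinearMap := by
    refine (LinearMap.injective_iff_surjective_of_finrank_eq_finrank ?_).1 hinj
    simp [Module.finrank_prod, Module.finrank_pi_fintype]
    ring
  have hmap := hstrict.map_nhds_eq_of_surj (LinearMap.range_eq_top.2 hsurj)
  have himg := Filter.image_mem_map (m := Φ) hQ
  rw [hmap, hΦ0] at himg
  have hc : Tendsto (fun t : ℝ => ((t, 0, 1) : ℝ × (Fin m → Fin m → ℝ) × (Fin m → ℝ)))
      (𝓝 0) (𝓝 (0, 0, 1)) := by
    apply Continuous.tendsto' (by fun_prop) _ _ rfl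
  filter_upwards [hc himg] with t ht
  obtain ⟨⟨t', d, V⟩, hQx, hx⟩ := ht
  simp only [Φ, Prod.mk.injEq] at hx
  obtain ⟨rfl, hx1, hx2⟩ := hx
  let V' : Matrix (Fin m) (Fin m) ℝ := V
  have heq : (A + t' • E + Matrix.diagonal d) * V' = V' * Matrix.diagonal lam := by
    ext i j
    have := congrFun (congrFun hx1 i) j
    simp only [Pi.zero_apply] at this
    rw [Matrix.add_mul, Matrix.add_apply, Matrix.diagonal_mul, Matrix.mul_diagonal,
      Matrix.mul_apply]
    simp only [Matrix.add_apply, Matrix.smul_apply, smul_eq_mul]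
    linarith
  refine ⟨d, V', ?_, heq, hQx⟩
  have hBs : (A + t' • E + Matrix.diagonal d)ᵀ = A + t' • E + Matrix.diagonal d := by
    simp [Matrix.transpose_add, hA.eq, hE.eq]
  have hT := congrArg Matrix.transpose heq
  rw [Matrix.transpose_mul, hBs, Matrix.transpose_mul, Matrix.diagonal_transpose] at hT
  have hcm : V'ᵀ * V' * Matrix.diagonal lam = Matrix.diagonal lam * (V'ᵀ * V') := by
    rw [Matrix.mul_assoc, ← heq, ← Matrix.mul_assoc, hT, Matrix.mul_assoc]
  ext i j
  by_cases hij : i = j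
  · subst hij
    have := congrFun hx2 i
    simpa [Matrix.mul_apply] using this
  · have := congrFun (congrFun hcm i) j
    rw [Matrix.mul_diagonal, Matrix.diagonal_mul] at this
    have h5 : (lam i - lam j) * (V'ᵀ * V') i j = 0 := by linarith
    rw [Matrix.one_apply_ne hij]
    rcases mul_eq_zero.1 h5 with h | h
    · exact absurd (hlam (sub_eq_zero.1 h)) hij
    · exact h

/-- Inductive invariant: `A` is a matrix supported on edges of `G` inside `S`. -/
structure GoodPair {m : ℕ} (G : SimpleGraph (Fin m)) (lam : Fin m → ℝ) (S : Finset (Fin m))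
    (Y : Finset (Fin m → ℝ)) (A U : Matrix (Fin m) (Fin m) ℝ) : Prop where
  symm : A.IsSymm
  orth : Uᵀ * U = 1
  eig : A * U = U * Matrix.diagonal lam
  hdet : (Matrix.hadamard U U).det ≠ 0
  hApat : ∀ i j, i ≠ j → A i j ≠ 0 → G.Adj i j ∧ i ∈ S ∧ j ∈ S
  hUpat : ∀ i j, i ≠ j → U i j ≠ 0 → i ∈ S ∧ j ∈ S
  hR : ∀ k, k ∉ S → ∀ i ∈ S, ∀ p ∈ S, ∑ j ∈ S, U i j * U p j * (lam k - lam j)⁻¹ ≠ 0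
  hv : ∀ v ∈ Y, ∀ i ∈ S, (∃ j ∈ S, v j ≠ 0) → ∑ j ∈ S, U i j * v j ≠ 0

theorem good_base {m : ℕ} (G : SimpleGraph (Fin m)) (lam : Fin m → ℝ)
    (hlam : Function.Injective lam) (r : Fin m) (Y : Finset (Fin m → ℝ)) :
    GoodPair G lam {r} Y (Matrix.diagonal lam) 1 where
  symm := by simp [Matrix.IsSymm]
  orth := by simp
  eig := by simp
  hdet := by
    have : Matrix.hadamard (1 : Matrix (Fin m) (Fin m) ℝ) 1 = 1 := by
      ext i j
      by_cases h : i = j <;> simp [Matrix.one_apply, h]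
    simp [this]
  hApat := fun i j hij h => absurd (Matrix.diagonal_apply_ne _ hij) h
  hUpat := fun i j hij h => absurd (Matrix.one_apply_ne hij) h
  hR := by
    intro k hk i hi p hp
    simp only [Finset.mem_singleton] at hk hi hp
    subst hi hp
    simp only [Finset.sum_singleton, Matrix.one_apply_eq, one_mul]
    exact inv_ne_zero (sub_ne_zero.2 fun h => hk (hlam h))
  hv := by
    intro v _ i hi hj
    simp only [Finset.mem_singleton, exists_eq_left] at hi hj
    subst hi
    simpa using hj

open Topology in
theorem good_step {m : ℕ} (G : SimpleGraph (Fin m)) (lam : Fin m → ℝ)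
    (hlam : Function.Injective lam) (S : Finset (Fin m)) (p q : Fin m)
    (hp : p ∈ S) (hq : q ∉ S) (hpq : G.Adj p q) (Y : Finset (Fin m → ℝ))
    (A U : Matrix (Fin m) (Fin m) ℝ)
    (h : GoodPair G lam S (Y ∪ Y.image (fun v j => (lam j - lam q)⁻¹ * v j)) A U) :
    ∃ A' U', GoodPair G lam (insert q S) Y A' U' := by
  classical
  have hpq' : p ≠ q := hpq.ne
  have hne : ∀ i j, i ≠ j → lam i - lam j ≠ 0 := fun i j hij => sub_ne_zero.2 fun h => hij (hlam h)
  have hSq : ∀ j ∈ S, j ≠ q := fun j hj h => hq (h ▸ hj)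
  -- structure of U, A outside S
  have hU0 : ∀ i j, i ≠ j → (i ∉ S ∨ j ∉ S) → U i j = 0 := by
    intro i j hij hh
    by_contra hc
    have := h.hUpat i j hij hc
    tauto
  have hUkk : ∀ k, k ∉ S → U k k ≠ 0 := by
    intro k hk hz
    have := congrFun (congrFun h.orth k) k
    rw [Matrix.mul_apply, Matrix.one_apply_eq, Finset.sum_eq_zero] at this
    · exact zero_ne_one this
    · intro i _
      by_cases hik : i = k
      · subst hik; simp [hz]
      · simp [hU0 i k hik (Or.inr hk)]
  have hAkk : ∀ k, k ∉ S → A k k = lam k := by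
    intro k hk
    have := congrFun (congrFun h.eig k) k
    rw [Matrix.mul_apply, Matrix.mul_diagonal, Finset.sum_eq_single k] at this
    · exact mul_right_cancel₀ (hUkk k hk) (this.trans (mul_comm _ _))
    · intro b _ hb
      rw [hU0 b k hb (Or.inr hk), mul_zero]
    · simp
  let x0 : ℝ × (Fin m → ℝ) × (Fin m → Fin m → ℝ) := (0, 0, U)
  have cV : ∀ i j, ContinuousAt (fun x : ℝ × (Fin m → ℝ) × (Fin m → Fin m → ℝ) => x.2.2 i j) x0 :=
    fun i j => by fun_prop
  have cI : ∀ j ∈ S, ContinuousAt (fun x : ℝ × (Fin m → ℝ) × (Fin m → Fin m → ℝ) =>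
      (lam j - (A q q + x.2.1 q))⁻¹) x0 := by
    intro j hj
    refine ContinuousAt.inv₀ (by fun_prop) ?_
    simp only [x0, Pi.zero_apply, add_zero, hAkk q hq]
    exact hne _ _ (hSq j hj)
  have csum : ∀ (T : Finset (Fin m))
      (f : Fin m → ℝ × (Fin m → ℝ) × (Fin m → Fin m → ℝ) → ℝ),
      (∀ j ∈ T, ContinuousAt (f j) x0) → (∑ j ∈ T, f j x0 ≠ 0) →
      ∀ᶠ x in 𝓝 x0, ∑ j ∈ T, f j x ≠ 0 := by
    intro T f hf hne0
    have : ContinuousAt (fun x => ∑ j ∈ T, f j x) x0 := tendsto_finsetSum T fun j hj => hf j hj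
    exact this.eventually_ne hne0
  have e1 : ∀ᶠ x in 𝓝 x0, ∀ k j, k ∉ S → k ≠ j → A k k + x.2.1 k ≠ lam j := by
    refine eventually_all.2 fun k => eventually_all.2 fun j => ?_
    by_cases hk : k ∉ S ∧ k ≠ j
    · have c : ContinuousAt (fun x : ℝ × (Fin m → ℝ) × (Fin m → Fin m → ℝ) => A k k + x.2.1 k) x0 :=
        by fun_prop
      refine (c.eventually_ne ?_).mono fun x hx _ _ => hx
      simp only [x0, Pi.zero_apply, add_zero, hAkk k hk.1]
      exact fun h => hk.2 (hlam h)
    · exact Eventually.of_forall fun x h1 h2 => absurd ⟨h1, h2⟩ hk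
  have e2 : ∀ᶠ x in 𝓝 x0, ∀ k, k ∉ S → x.2.2 k k ≠ 0 := by
    refine eventually_all.2 fun k => ?_
    by_cases hk : k ∈ S
    · exact Eventually.of_forall fun x h1 => absurd hk h1
    · exact ((cV k k).eventually_ne (hUkk k hk)).mono fun x hx _ => hx
  have e3 : ∀ᶠ x in 𝓝 x0, (Matrix.of fun i j => x.2.2 i j * x.2.2 i j).det ≠ 0 := by
    have c : Continuous (fun x : ℝ × (Fin m → ℝ) × (Fin m → Fin m → ℝ) =>
        (Matrix.of fun i j => x.2.2 i j * x.2.2 i j).det) := by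
      apply Continuous.matrix_det
      apply continuous_matrix
      intro i j
      simp only [Matrix.of_apply]
      fun_prop
    exact c.continuousAt.eventually_ne h.hdet
  have hsplit : ∀ f : Fin m → ℝ, ∑ j ∈ insert q S, f j = f q + ∑ j ∈ S, f j :=
    fun f => Finset.sum_insert hq
  have e5 : ∀ᶠ x in 𝓝 x0, ∀ v ∈ Y, ∀ i ∈ S, (∃ j ∈ S, v j ≠ 0) →
      ∑ j ∈ insert q S, x.2.2 i j * v j ≠ 0 := by
    refine (Filter.eventually_all_finset Y).2 fun v hvY =>
      (Filter.eventually_all_finset S).2 fun i hi => ?_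
    by_cases hv : ∃ j ∈ S, v j ≠ 0
    · refine (csum _ (fun j x => x.2.2 i j * v j) (fun j _ => by fun_prop) ?_).mono fun x hx _ => hx
      rw [hsplit]
      simp only [x0, hU0 i q (hSq i hi) (Or.inr hq), zero_mul, zero_add]
      exact h.hv v (Finset.mem_union_left _ hvY) i hi hv
    · exact Eventually.of_forall fun x h1 => absurd h1 hv
  have e6 : ∀ᶠ x in 𝓝 x0, ∀ v ∈ Y, v q ≠ 0 → ∑ j ∈ insert q S, x.2.2 q j * v j ≠ 0 := by
    refine (Filter.eventually_all_finset Y).2 fun v hvY => ?_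
    by_cases hv : v q ≠ 0
    · refine (csum _ (fun j x => x.2.2 q j * v j) (fun j _ => by fun_prop) ?_).mono fun x hx _ => hx
      rw [hsplit, Finset.sum_eq_zero, add_zero]
      · exact mul_ne_zero (hUkk q hq) hv
      · intro j hj
        simp only [x0, hU0 q j (hSq j hj).symm (Or.inl hq), zero_mul]
    · exact Eventually.of_forall fun x h1 => absurd h1 hv
  have e7 : ∀ᶠ x in 𝓝 x0, ∀ v ∈ Y, (∃ j ∈ S, v j ≠ 0) →
      ∑ j ∈ S, x.2.2 p j * ((lam j - (A q q + x.2.1 q))⁻¹ * v j) ≠ 0 := by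
    refine (Filter.eventually_all_finset Y).2 fun v hvY => ?_
    by_cases hv : ∃ j ∈ S, v j ≠ 0
    · refine (csum _ (fun j x => x.2.2 p j * ((lam j - (A q q + x.2.1 q))⁻¹ * v j))
        (fun j hj => (cV p j).mul ((cI j hj).mul continuousAt_const)) ?_).mono fun x hx _ => hx
      simp only [x0, Pi.zero_apply, add_zero, hAkk q hq]
      refine h.hv (fun j => (lam j - lam q)⁻¹ * v j)
        (Finset.mem_union_right _ (Finset.mem_image_of_mem _ hvY)) p hp ?_
      obtain ⟨j, hj, hvj⟩ := hv
      exact ⟨j, hj, mul_ne_zero (inv_ne_zero (hne _ _ (hSq j hj))) hvj⟩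
    · exact Eventually.of_forall fun x h1 => absurd h1 hv
  have e8 : ∀ᶠ x in 𝓝 x0, ∀ i ∈ S,
      ∑ j ∈ S, x.2.2 i j * x.2.2 p j * (lam j - (A q q + x.2.1 q))⁻¹ ≠ 0 := by
    refine (Filter.eventually_all_finset S).2 fun i hi => ?_
    refine (csum _ (fun j x => x.2.2 i j * x.2.2 p j * (lam j - (A q q + x.2.1 q))⁻¹)
        (fun j hj => ((cV i j).mul (cV p j)).mul (cI j hj)) ?_)
    simp only [x0, Pi.zero_apply, add_zero, hAkk q hq]
    have := neg_ne_zero.2 (h.hR q hq i hi p hp)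
    rw [← Finset.sum_neg_distrib] at this
    convert this using 2 with j
    rw [← neg_sub (lam q) (lam j), inv_neg, mul_neg]
  have e9 : ∀ᶠ x in 𝓝 x0, ∀ k, k ∉ insert q S → ∀ i ∈ S, ∀ i' ∈ S,
      ∑ j ∈ insert q S, x.2.2 i j * x.2.2 i' j * (lam k - lam j)⁻¹ ≠ 0 := by
    refine eventually_all.2 fun k => ?_
    by_cases hk : k ∈ insert q S
    · exact Eventually.of_forall fun x h1 => absurd hk h1
    have hkS : k ∉ S := fun h => hk (Finset.mem_insert_of_mem h)
    have : ∀ᶠ x in 𝓝 x0, ∀ i ∈ S, ∀ i' ∈ S,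
      ∑ j ∈ insert q S, x.2.2 i j * x.2.2 i' j * (lam k - lam j)⁻¹ ≠ 0 := by
      refine (Filter.eventually_all_finset S).2 fun i hi =>
        (Filter.eventually_all_finset S).2 fun i' hi' => ?_
      refine (csum _ (fun j x => x.2.2 i j * x.2.2 i' j * (lam k - lam j)⁻¹)
        (fun j hj => ((cV i j).mul (cV i' j)).mul continuousAt_const) ?_)
      rw [hsplit]
      simp only [x0, hU0 i q (hSq i hi) (Or.inr hq), zero_mul, zero_add]
      exact h.hR k hkS i hi i' hi'
    exact this.mono fun x hx _ => hx
  have e10 : ∀ᶠ x in 𝓝 x0, ∀ k, k ∉ insert q S →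
      ∑ j ∈ insert q S, x.2.2 q j * x.2.2 q j * (lam k - lam j)⁻¹ ≠ 0 := by
    refine eventually_all.2 fun k => ?_
    by_cases hk : k ∈ insert q S
    · exact Eventually.of_forall fun x h1 => absurd hk h1
    refine (csum _ (fun j x => x.2.2 q j * x.2.2 q j * (lam k - lam j)⁻¹)
      (fun j hj => ((cV q j).mul (cV q j)).mul continuousAt_const) ?_).mono fun x hx _ => hx
    rw [hsplit, Finset.sum_eq_zero, add_zero]
    · refine mul_ne_zero (mul_ne_zero (hUkk q hq) (hUkk q hq)) (inv_ne_zero (hne _ _ ?_))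
      rintro rfl
      exact hk (Finset.mem_insert_self _ _)
    · intro j hj
      simp only [x0, hU0 q j (hSq j hj).symm (Or.inl hq), zero_mul]
  have e11 : ∀ᶠ x in 𝓝 x0, ∀ k, k ∉ insert q S → ∀ i ∈ S,
      ∑ j ∈ S, x.2.2 i j * x.2.2 p j * (lam j - (A q q + x.2.1 q))⁻¹ *
        ((lam k - lam j)⁻¹ - (lam k - lam q)⁻¹) ≠ 0 := by
    refine eventually_all.2 fun k => ?_
    by_cases hk : k ∈ insert q S
    · exact Eventually.of_forall fun x h1 => absurd hk h1
    have hkS : k ∉ S := fun h => hk (Finset.mem_insert_of_mem h)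
    have hkq : k ≠ q := by
      rintro rfl
      exact hk (Finset.mem_insert_self _ _)
    have : ∀ᶠ x in 𝓝 x0, ∀ i ∈ S,
      ∑ j ∈ S, x.2.2 i j * x.2.2 p j * (lam j - (A q q + x.2.1 q))⁻¹ *
        ((lam k - lam j)⁻¹ - (lam k - lam q)⁻¹) ≠ 0 := by
      refine (Filter.eventually_all_finset S).2 fun i hi => ?_
      refine (csum _ (fun j x => x.2.2 i j * x.2.2 p j * (lam j - (A q q + x.2.1 q))⁻¹ *
        ((lam k - lam j)⁻¹ - (lam k - lam q)⁻¹))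
        (fun j hj => (((cV i j).mul (cV p j)).mul (cI j hj)).mul continuousAt_const) ?_)
      simp only [x0, Pi.zero_apply, add_zero, hAkk q hq]
      have h1 := mul_ne_zero (h.hR k hkS i hi p hp) (inv_ne_zero (hne k q hkq))
      rw [Finset.sum_mul] at h1
      convert h1 using 1
      refine Finset.sum_congr rfl fun j hj => ?_
      have a1 := hne k q hkq
      have a2 := hne j q (hSq j hj)
      have a3 : lam k - lam j ≠ 0 := hne k j (fun hkj => hkS (hkj ▸ hj))
      field_simp
      ring
    exact this.mono fun x hx _ => hx
  -- the perturbation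
  let E : Matrix (Fin m) (Fin m) ℝ :=
    Matrix.of fun i j => if (i = p ∧ j = q) ∨ (i = q ∧ j = p) then 1 else 0
  have hE : E.IsSymm := by
    ext i j
    simp only [E, Matrix.transpose_apply, Matrix.of_apply]
    congr 1
    apply propext
    tauto
  have hpert := perturb lam hlam A E U h.symm hE h.orth h.eig h.hdet _
    (e1.and <| e2.and <| e3.and <| e5.and <| e6.and <| e7.and <| e8.and <| e9.and <|
      e10.and e11)
  have hpert' := (hpert.filter_mono (nhdsWithin_le_nhds (s := {0}ᶜ))).and self_mem_nhdsWithin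
  obtain ⟨t, ⟨d, V, hV, hAV, f1, f2, f3, f5, f6, f7, f8, f9, f10, f11⟩, ht⟩ := hpert'.exists
  have ht0 : t ≠ 0 := ht
  clear hpert hpert' e1 e2 e3 e5 e6 e7 e8 e9 e10 e11 cV cI csum
  dsimp only at f1 f2 f3 f5 f6 f7 f8 f9 f10 f11
  set B := A + t • E + Matrix.diagonal d with hB
  have hBoff : ∀ i j, i ≠ j → B i j = A i j + t * E i j := by
    intro i j hij
    simp [hB, Matrix.diagonal_apply_ne _ hij]
  have hBpat : ∀ i j, i ≠ j → B i j ≠ 0 → G.Adj i j ∧ i ∈ insert q S ∧ j ∈ insert q S := by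
    intro i j hij hb
    rw [hBoff i j hij] at hb
    by_cases ha : A i j = 0
    · rw [ha, zero_add] at hb
      have : E i j ≠ 0 := right_ne_zero_of_mul hb
      simp only [E, Matrix.of_apply, ne_eq, ite_eq_right_iff, one_ne_zero, imp_false, not_not]
        at this
      rcases this with ⟨rfl, rfl⟩ | ⟨rfl, rfl⟩
      · exact ⟨hpq, Finset.mem_insert_of_mem hp, Finset.mem_insert_self _ _⟩
      · exact ⟨hpq.symm, Finset.mem_insert_self _ _, Finset.mem_insert_of_mem hp⟩
    · have := h.hApat i j hij ha
      exact ⟨this.1, Finset.mem_insert_of_mem this.2.1, Finset.mem_insert_of_mem this.2.2⟩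
  have hBkk : ∀ k, k ∉ S → B k k = A k k + d k := by
    intro k hk
    have : E k k = 0 := by
      simp only [E, Matrix.of_apply, ite_eq_right_iff, one_ne_zero, imp_false]
      rintro (⟨h1, h2⟩ | ⟨h1, h2⟩)
      · exact hpq' (h1.symm.trans h2)
      · exact hpq' (h2.symm.trans h1)
    simp [hB, this]
  have hVV : V * Vᵀ = 1 := mul_eq_one_comm.1 hV
  have hBs : B.IsSymm := by
    simp [hB, Matrix.IsSymm, Matrix.transpose_add, h.symm.eq, hE.eq]
  have hrow : ∀ k, k ∉ insert q S → ∀ j, k ≠ j → V k j = 0 := by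
    intro k hk j hkj
    have hkS : k ∉ S := fun h => hk (Finset.mem_insert_of_mem h)
    have h1 := congrFun (congrFun hAV k) j
    rw [Matrix.mul_apply, Matrix.mul_diagonal, Finset.sum_eq_single k, hBkk k hkS] at h1
    · have h2 : (A k k + d k - lam j) * V k j = 0 := by linarith
      exact (mul_eq_zero.1 h2).resolve_left (sub_ne_zero.2 (f1 k j hkS hkj))
    · intro l _ hl
      by_cases hz : B k l = 0
      · rw [hz, zero_mul]
      · exact absurd (hBpat k l hl.symm hz).2.1 hk
    · simp
  have horth : ∀ i j, i ≠ j → ∑ l, V i l * V j l = 0 := by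
    intro i j hij
    have := congrFun (congrFun hVV i) j
    rwa [Matrix.mul_apply, Matrix.one_apply_ne hij] at this
  have hcol : ∀ k, k ∉ insert q S → ∀ j, k ≠ j → V j k = 0 := by
    intro k hk j hkj
    have hkS : k ∉ S := fun h => hk (Finset.mem_insert_of_mem h)
    have h1 := horth k j hkj
    rw [Finset.sum_eq_single k] at h1
    · exact (mul_eq_zero.1 h1).resolve_left (f2 k hkS)
    · intro l _ hl
      rw [hrow k hk l hl.symm, zero_mul]
    · simp
  have hVq : ∀ j ∈ S, V q j = t * (V p j * (lam j - (A q q + d q))⁻¹) := by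
    intro j hj
    have h1 := congrFun (congrFun hAV q) j
    have hBqp : B q p = t := by
      rw [hBoff q p hpq'.symm]
      have : A q p = 0 := by
        by_contra hc
        exact hq (h.hApat q p hpq'.symm hc).2.1
      simp [this, E]
    rw [Matrix.mul_apply, Matrix.mul_diagonal, Finset.sum_eq_add p q hpq', hBqp, hBkk q hq] at h1
    · have h2 : lam j - (A q q + d q) ≠ 0 := sub_ne_zero.2 (f1 q j hq (hSq j hj).symm).symm
      field_simp
      linarith
    · intro l _ hl
      have : B q l = 0 := by
        rw [hBoff q l hl.2.symm]
        have h3 : A q l = 0 := by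
          by_contra hc
          exact hq (h.hApat q l hl.2.symm hc).2.1
        simp [h3, E, hl.1, hl.2]
      rw [this, zero_mul]
    · simp
    · simp
  have hiq : ∀ i ∈ S, V i q * V q q
      = -(t * ∑ j ∈ S, V i j * V p j * (lam j - (A q q + d q))⁻¹) := by
    intro i hi
    have h1 := horth i q (hSq i hi)
    rw [← Finset.sum_subset (Finset.subset_univ (insert q S)), hsplit] at h1
    · have h2 : ∑ j ∈ S, V i j * V q j
          = t * ∑ j ∈ S, V i j * V p j * (lam j - (A q q + d q))⁻¹ := by
        rw [Finset.mul_sum]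
        refine Finset.sum_congr rfl fun j hj => ?_
        rw [hVq j hj]; ring
      linarith
    · intro l _ hl
      rw [hcol l hl q (fun h => hl (h ▸ Finset.mem_insert_self _ _)), mul_zero]
  have hRq : ∀ k, k ∉ insert q S → ∀ i ∈ S,
      ∑ j ∈ insert q S, V i j * V q j * (lam k - lam j)⁻¹ ≠ 0 := by
    intro k hk i hi
    have h1 := mul_ne_zero ht0 (f11 k hk i hi)
    convert h1 using 1
    rw [hsplit, hiq i hi, Finset.mul_sum, Finset.mul_sum, ← Finset.sum_neg_distrib,
      Finset.sum_mul, ← Finset.sum_add_distrib]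
    refine Finset.sum_congr rfl fun j hj => ?_
    rw [hVq j hj]; ring
  refine ⟨B, V, hBs, hV, hAV, f3, hBpat, ?_, ?_, ?_⟩
  · intro i j hij hv
    constructor
    · by_contra hc
      exact hv (hrow i hc j hij)
    · by_contra hc
      exact hv (hcol j hc i hij.symm)
  · intro k hk i hi i' hi'
    rcases Finset.mem_insert.1 hi with rfl | hiS
    · rcases Finset.mem_insert.1 hi' with rfl | hi'
      · exact f10 k hk
      · have := hRq k hk i' hi'
        convert this using 2 with j
        ring
    · rcases Finset.mem_insert.1 hi' with rfl | hi'
      · exact hRq k hk i hiS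
      · exact f9 k hk i hiS i' hi'
  · intro v hvY i hi hex
    rcases Finset.mem_insert.1 hi with rfl | hi
    · by_cases hvq : v i = 0
      · have hex' : ∃ j ∈ S, v j ≠ 0 := by
          obtain ⟨j, hj, hvj⟩ := hex
          rcases Finset.mem_insert.1 hj with rfl | hj
          · exact absurd hvq hvj
          · exact ⟨j, hj, hvj⟩
        have h1 := mul_ne_zero ht0 (f7 v hvY hex')
        convert h1 using 1
        rw [hsplit, hvq, mul_zero, zero_add, Finset.mul_sum]
        refine Finset.sum_congr rfl fun j hj => ?_
        rw [hVq j hj]; ring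
      · exact f6 v hvY hvq
    · by_cases hex' : ∃ j ∈ S, v j ≠ 0
      · exact f5 v hvY i hi hex'
      · push Not at hex'
        have hvq : v q ≠ 0 := by
          obtain ⟨j, hj, hvj⟩ := hex
          rcases Finset.mem_insert.1 hj with rfl | hj
          · exact hvj
          · exact absurd (hex' j hj) hvj
        rw [hsplit, Finset.sum_eq_zero fun j hj => by rw [hex' j hj, mul_zero], add_zero]
        refine mul_ne_zero (fun hz => ?_) hvq
        have h1 := hiq i hi
        rw [hz, zero_mul] at h1
        exact mul_ne_zero ht0 (f8 i hi) (by linarith)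

theorem exists_good {m : ℕ} (G : SimpleGraph (Fin m)) (hG : G.Connected) (lam : Fin m → ℝ)
    (hlam : Function.Injective lam) (n : ℕ) (hn : n < m) :
    ∃ S : Finset (Fin m), S.card = n + 1 ∧ ∀ Y, ∃ A U, GoodPair G lam S Y A U := by
  induction n with
  | zero => exact ⟨{⟨0, hn⟩}, by simp, fun Y => ⟨_, _, good_base G lam hlam _ Y⟩⟩
  | succ n ih =>
    obtain ⟨S, hS, hgood⟩ := ih (by omega)
    have hne : S.Nonempty := Finset.card_pos.1 (by omega)
    obtain ⟨a, ha⟩ := hne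
    have hb : ∃ b, b ∉ S := by
      by_contra hc
      push Not at hc
      have : S = Finset.univ := Finset.eq_univ_iff_forall.2 hc
      rw [this, Finset.card_univ, Fintype.card_fin] at hS
      omega
    obtain ⟨b, hb⟩ := hb
    obtain ⟨w⟩ := hG.preconnected a b
    obtain ⟨dd, -, h1, h2⟩ := w.exists_boundary_dart (S : Set (Fin m)) ha hb
    refine ⟨insert dd.snd S, by rw [Finset.card_insert_of_notMem h2, hS], fun Y => ?_⟩
    obtain ⟨A, U, h⟩ := hgood (Y ∪ Y.image (fun v j => (lam j - lam dd.snd)⁻¹ * v j))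
    exact good_step G lam hlam S dd.fst dd.snd h1 h2 dd.adj Y A U h

/-- Theorem 2.4: for a connected graph `G`, distinct eigenvalues and a finite
set `Y` of nonzero vectors, there are `A ∈ S(G) ∩ 𝓔_Λ` with the SSP and orthogonal `U`
diagonalising `A` such that `U v` is nowhere-zero for all `v ∈ Y`. -/
theorem statement3 (m : ℕ) (G : SimpleGraph (Fin m)) (hG : G.Connected)
    (lam : Fin m → ℝ) (hlam : StrictMono lam)
    (Y : Finset (Fin m → ℝ)) (hY : ∀ y ∈ Y, y ≠ 0) :
    ∃ A U : Matrix (Fin m) (Fin m) ℝ,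
      inS G A ∧ specMultiset A = Finset.univ.val.map lam ∧ HasSSP A ∧
      Uᵀ * U = 1 ∧ Uᵀ * A * U = Matrix.diagonal lam ∧
      ∀ y ∈ Y, ∀ i, U.mulVec y i ≠ 0 := by
  classical
  have hinj := hlam.injective
  have hm : 0 < m := by
    obtain ⟨r⟩ := hG.nonempty
    exact r.pos
  obtain ⟨S, hS, hgood⟩ := exists_good G hG lam hinj (m - 1) (by omega)
  have hSu : S = Finset.univ := Finset.eq_univ_of_card S (by rw [hS, Fintype.card_fin]; omega)
  subst hSu
  obtain ⟨A, U, h⟩ := hgood Y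
  let E : Matrix (Fin m) (Fin m) ℝ :=
    Matrix.of fun i j => if G.Adj i j ∧ A i j = 0 then 1 else 0
  have hE : E.IsSymm := by
    ext i j
    simp only [E, Matrix.transpose_apply, Matrix.of_apply]
    congr 1
    rw [G.adj_comm, h.symm.apply]
  let x0 : ℝ × (Fin m → ℝ) × (Fin m → Fin m → ℝ) := (0, 0, U)
  have e1 : ∀ᶠ x in nhds x0, ∀ i j, A i j ≠ 0 → A i j + x.1 * E i j ≠ 0 := by
    refine eventually_all.2 fun i => eventually_all.2 fun j => ?_
    by_cases ha : A i j = 0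
    · exact Eventually.of_forall fun x h1 => absurd ha h1
    · have c : ContinuousAt (fun x : ℝ × (Fin m → ℝ) × (Fin m → Fin m → ℝ) =>
        A i j + x.1 * E i j) x0 := by fun_prop
      exact (c.eventually_ne (by simpa [x0] using ha)).mono fun x hx _ => hx
  have e3 : ∀ᶠ x in nhds x0, (Matrix.of fun i j => x.2.2 i j * x.2.2 i j).det ≠ 0 := by
    have c : Continuous (fun x : ℝ × (Fin m → ℝ) × (Fin m → Fin m → ℝ) =>
        (Matrix.of fun i j => x.2.2 i j * x.2.2 i j).det) := by
      apply Continuous.matrix_det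
      apply continuous_matrix
      intro i j
      simp only [Matrix.of_apply]
      fun_prop
    exact c.continuousAt.eventually_ne h.hdet
  have e5 : ∀ᶠ x in nhds x0, ∀ v ∈ Y, ∀ i, ∑ j, x.2.2 i j * v j ≠ 0 := by
    refine (Filter.eventually_all_finset Y).2 fun v hvY => eventually_all.2 fun i => ?_
    have c : ContinuousAt (fun x : ℝ × (Fin m → ℝ) × (Fin m → Fin m → ℝ) =>
        ∑ j, x.2.2 i j * v j) x0 := by fun_prop
    refine c.eventually_ne (h.hv v hvY i (Finset.mem_univ _) ?_)
    obtain ⟨j, hj⟩ := Function.ne_iff.1 (hY v hvY)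
    exact ⟨j, Finset.mem_univ _, hj⟩
  have hpert := perturb lam hinj A E U h.symm hE h.orth h.eig h.hdet _
    (e1.and <| e3.and e5)
  have hpert' := (hpert.filter_mono (nhdsWithin_le_nhds (s := {0}ᶜ))).and self_mem_nhdsWithin
  obtain ⟨t, ⟨d, V, hV, hAV, f1, f3, f5⟩, ht⟩ := hpert'.exists
  have ht0 : t ≠ 0 := ht
  dsimp only at f1 f3 f5
  set B := A + t • E + Matrix.diagonal d with hB
  have hVV : V * Vᵀ = 1 := mul_eq_one_comm.1 hV
  have hdiag : Vᵀ * B * V = Matrix.diagonal lam := by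
    rw [Matrix.mul_assoc, hAV, ← Matrix.mul_assoc, hV, Matrix.one_mul]
  have hBs : B.IsSymm := by
    simp [hB, Matrix.IsSymm, Matrix.transpose_add, h.symm.eq, hE.eq]
  refine ⟨B, V, ⟨hBs, ?_⟩, ?_, ?_, hV, hdiag, f5⟩
  · intro i j hij
    have hBij : B i j = A i j + t * E i j := by
      simp [hB, Matrix.diagonal_apply_ne _ hij]
    rw [hBij]
    by_cases ha : A i j = 0
    · simp only [ha, zero_add, E, Matrix.of_apply, and_true]
      by_cases hadj : G.Adj i j <;> simp [hadj, ht0]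
    · exact ⟨fun _ => (h.hApat i j hij ha).1, fun _ => f1 i j ha⟩
  · have hc : B.charpoly = (Matrix.diagonal lam).charpoly := by
      let u : (Matrix (Fin m) (Fin m) ℝ)ˣ := ⟨V, Vᵀ, hVV, hV⟩
      have h1 := Matrix.charpoly_units_conj' u B
      have h2 : ((u : Matrix (Fin m) (Fin m) ℝ))⁻¹ = Vᵀ := Matrix.inv_eq_left_inv hV
      rw [h2] at h1
      rw [← h1, ← hdiag]
    rw [specMultiset, hc, Matrix.charpoly_diagonal]
    have h1 := Polynomial.roots_multiset_prod_X_sub_C (Finset.univ.val.map lam)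
    rw [Multiset.map_map] at h1
    exact h1
  · intro X _ hBX _ hX
    have hVB : Vᵀ * B = Matrix.diagonal lam * Vᵀ := by
      have := congrArg Matrix.transpose hAV
      rwa [Matrix.transpose_mul, Matrix.transpose_mul, hBs.eq, Matrix.diagonal_transpose] at this
    set Z := Vᵀ * X * V with hZ
    have hcomm : Matrix.diagonal lam * Z = Z * Matrix.diagonal lam := by
      calc Matrix.diagonal lam * Z = (Matrix.diagonal lam * Vᵀ) * X * V := by
            simp only [hZ, Matrix.mul_assoc]
        _ = Vᵀ * (B * X) * V := by rw [← hVB]; simp only [Matrix.mul_assoc]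
        _ = Vᵀ * X * (B * V) := by rw [hBX]; simp only [Matrix.mul_assoc]
        _ = Z * Matrix.diagonal lam := by rw [hAV]; simp only [hZ, Matrix.mul_assoc]
    have hZoff : ∀ i j, i ≠ j → Z i j = 0 := by
      intro i j hij
      have := congrFun (congrFun hcomm i) j
      rw [Matrix.mul_diagonal, Matrix.diagonal_mul] at this
      have h5 : (lam i - lam j) * Z i j = 0 := by linarith
      exact (mul_eq_zero.1 h5).resolve_left (sub_ne_zero.2 fun h => hij (hinj h))
    let z : Fin m → ℝ := fun i => Z i i
    have hZd : Z = Matrix.diagonal z := by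
      ext i j
      by_cases hij : i = j
      · subst hij; simp [z]
      · rw [hZoff i j hij, Matrix.diagonal_apply_ne _ hij]
    have hXV : X = V * Matrix.diagonal z * Vᵀ := by
      rw [← hZd, hZ]
      calc X = (V * Vᵀ) * X * (V * Vᵀ) := by rw [hVV, Matrix.one_mul, Matrix.mul_one]
        _ = _ := by simp only [Matrix.mul_assoc]
    have hz0 : z = 0 := by
      by_contra hne
      refine f3 (Matrix.exists_mulVec_eq_zero_iff.1 ⟨z, hne, ?_⟩)
      funext i
      have h1 := congrFun (congrFun hX i) i
      rw [Matrix.hadamard_apply, Matrix.one_apply_eq, one_mul, hXV, Matrix.mul_apply] at h1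
      simp only [Matrix.mul_diagonal, Matrix.transpose_apply, Matrix.zero_apply] at h1
      simp only [Matrix.mulVec, dotProduct, Matrix.of_apply, Pi.zero_apply]
      rw [← h1]
      exact Finset.sum_congr rfl fun _ _ => by ring
    have hd0 : Matrix.diagonal (0 : Fin m → ℝ) = 0 := by
      ext i j
      simp [Matrix.diagonal_apply]
    rw [hXV, hz0, hd0, Matrix.mul_zero, Matrix.zero_mul]
end

section
/- For every n ≥ 1, the path P_n is generically realisable. Concretely: the maximum eigenvalue multiplicity of any matrix in S(P_n) is 1, and for all real numbers λ₁ < λ₂ < … < λ_n and every finite set Y ⊆ ℝⁿ ∖ {0}, there exist a matrix A ∈ S(P_n) with spectrum {λ₁,…,λ_n} and an orthogonal matrix U with Uᵀ A U = diag(λ₁,…,λ_n) such that U y is nowhere-zero for every y ∈ Y. -/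
open Matrix Filter

def mC {n : ℕ} {R : Type*} [CommRing R] (i : ℕ) (lam y w : Fin n → R) :
    Matrix (Fin (i + 1)) (Fin n) R :=
  Matrix.of fun a k => if a.val < i then w k * lam k ^ a.val else y k

def mV {n : ℕ} {R : Type*} [CommRing R] (i : ℕ) (lam w : Fin n → R) :
    Matrix (Fin i) (Fin n) R :=
  Matrix.of fun a k => w k * lam k ^ a.val

def mF {n : ℕ} {R : Type*} [CommRing R] (i : ℕ) (lam y w : Fin n → R) : R :=
  (mC i lam y w * (mV (i + 1) lam w)ᵀ).det

lemma path_kernel {n : ℕ} (hn : 0 < n) (A : Matrix (Fin n) (Fin n) ℝ)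
    (hA : inS (SimpleGraph.pathGraph n) A) (μ : ℝ) (x : Fin n → ℝ)
    (hx : A *ᵥ x = μ • x) (h0 : x ⟨0, hn⟩ = 0) : x = 0 := by
  have key : ∀ m : ℕ, ∀ h : m < n, x ⟨m, h⟩ = 0 := by
    intro m
    induction m using Nat.strong_induction_on with
    | _ m ih =>
      intro h
      rcases m with _ | m
      · exact h0
      · have h1 := congrFun hx ⟨m, by omega⟩
        rw [Pi.smul_apply, ih m (by omega) (by omega), smul_zero] at h1
        rw [Matrix.mulVec, dotProduct, Finset.sum_eq_single ⟨m + 1, h⟩] at h1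
        · rcases mul_eq_zero.mp h1 with h2 | h2
          · exact absurd h2 ((hA.2 _ _ (by simp)).2
              (SimpleGraph.pathGraph_adj.2 (Or.inl rfl)))
          · exact h2
        · intro b _ hb
          have hb' : b.val ≠ m + 1 := fun hh => hb (Fin.ext hh)
          rcases lt_or_ge b.val (m + 1) with hlt | hge
          · rw [ih b.val hlt b.2, mul_zero]
          · have hne : (⟨m, by omega⟩ : Fin n) ≠ b := by
              intro hh
              have := congrArg Fin.val hh
              simp at this
              omega
            have h3 := (hA.2 _ _ hne).not
            rw [SimpleGraph.pathGraph_adj] at h3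
            have h4 : A ⟨m, by omega⟩ b = 0 := by
              by_contra h5
              apply h3.2 _ h5
              simp only
              omega
            rw [h4, zero_mul]
        · simp
  funext k
  exact key k.1 k.2

lemma path_simple {n : ℕ} (hn : 0 < n) (A : Matrix (Fin n) (Fin n) ℝ)
    (hA : inS (SimpleGraph.pathGraph n) A) (μ : ℝ) :
    Multiset.count μ (specMultiset A) ≤ 1 := by
  have hH : A.IsHermitian := by
    have := hA.1
    rw [Matrix.IsHermitian, Matrix.conjTranspose_eq_transpose_of_trivial]
    exact this
  have hinj : Function.Injective hH.eigenvalues := by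
    intro i j hij
    by_contra hne
    have hi := hH.mulVec_eigenvectorBasis i
    have hj := hH.mulVec_eigenvectorBasis j
    rw [← hij] at hj
    set u := hH.eigenvectorBasis i with hu
    set v := hH.eigenvectorBasis j with hv
    have hu0 : u.ofLp ⟨0, hn⟩ ≠ 0 := by
      intro h
      have h1 := path_kernel hn A hA _ _ hi h
      have h2 : u = 0 := by ext k; exact congrFun h1 k
      have h3 := hH.eigenvectorBasis.orthonormal.ne_zero i
      exact h3 h2
    have hx : (v.ofLp ⟨0, hn⟩ • u.ofLp - u.ofLp ⟨0, hn⟩ • v.ofLp) = 0 := by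
      apply path_kernel hn A hA (hH.eigenvalues i)
      · rw [Matrix.mulVec_sub, Matrix.mulVec_smul, Matrix.mulVec_smul, hi, hj, smul_sub,
          smul_comm, smul_comm (u.ofLp ⟨0, hn⟩)]
      · simp [mul_comm]
    have hx' : v.ofLp ⟨0, hn⟩ • u - u.ofLp ⟨0, hn⟩ • v = 0 := by
      ext k; exact congrFun hx k
    have h5 : inner ℝ (v.ofLp ⟨0, hn⟩ • u - u.ofLp ⟨0, hn⟩ • v) v = 0 := by
      rw [hx', inner_zero_left]
    have h6 : inner ℝ u v = 0 := hH.eigenvectorBasis.orthonormal.2 hne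
    have h7 : ‖v‖ = 1 := hH.eigenvectorBasis.orthonormal.1 j
    rw [inner_sub_left, inner_smul_left, inner_smul_left, h6, real_inner_self_eq_norm_sq, h7] at h5
    apply hu0
    simpa using h5
  apply Multiset.nodup_iff_count_le_one.mp
  rw [specMultiset, hH.roots_charpoly_eq_eigenvalues]
  exact Finset.univ.nodup.map (by simpa using hinj)

lemma mV_det {n : ℕ} (lam w : Fin n → ℝ) (hl : Function.Injective lam) (hw : ∀ k, w k ≠ 0) :
    (mV n lam w).det ≠ 0 := by
  have : mV n lam w = (vandermonde lam)ᵀ * diagonal w := by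
    ext a k
    simp [mV, mul_diagonal, vandermonde_apply, mul_comm]
  rw [this, det_mul, det_transpose, det_diagonal]
  exact mul_ne_zero (det_vandermonde_ne_zero_iff.2 hl) (Finset.prod_ne_zero_iff.2 fun k _ => hw k)

/-- The determinant polynomial does not vanish identically. -/
lemma mF_ne {n : ℕ} (lam : Fin n → ℝ) (hl : Function.Injective lam) (i : ℕ) (hi : i < n)
    (y : Fin n → ℝ) (hy : y ≠ 0) : ∃ w : Fin n → ℝ, mF i lam y w ≠ 0 := by
  obtain ⟨k, hk⟩ := Function.ne_iff.1 hy
  obtain ⟨e, he, hek⟩ : ∃ e : Fin (i + 1) → Fin n, Function.Injective e ∧ e (Fin.last i) = k := by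
    refine ⟨Equiv.swap (Fin.castLE hi (Fin.last i)) k ∘ Fin.castLE hi, ?_, ?_⟩
    · exact (Equiv.injective _).comp (Fin.castLE_injective hi)
    · simp
  let w : ℝ → Fin n → ℝ := fun t j => if j = k then t else if j ∈ Set.range e then 1 else 0
  have hfac : ∀ t, mF i lam y (w t) =
      ((mC i lam y (w t)).submatrix id e).det * (mV (i + 1) (lam ∘ e) (w t ∘ e)).det := by
    intro t
    rw [mF, ← det_transpose (mV (i + 1) (lam ∘ e) (w t ∘ e)), ← det_mul]
    congr 1
    ext a l
    rw [mul_apply, mul_apply]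
    symm
    apply Fintype.sum_of_injective e he
    · intro j hj
      have hjk : j ≠ k := by
        rintro rfl
        exact hj ⟨_, hek⟩
      have : w t j = 0 := by simp only [w, if_neg hjk, if_neg hj]
      simp [mV, this]
    · intro s
      simp [mV]
  have hcont : Continuous fun t => ((mC i lam y (w t)).submatrix id e).det := by
    apply Continuous.matrix_det
    apply continuous_matrix
    intro a s
    simp only [mC, submatrix_apply, of_apply, w]
    split_ifs <;> fun_prop
  have h0 : ((mC i lam y (w 0)).submatrix id e).det ≠ 0 := by
    rw [det_succ_column _ (Fin.last i), Finset.sum_eq_single (Fin.last i)]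
    · refine mul_ne_zero (mul_ne_zero (pow_ne_zero _ (by norm_num)) ?_) ?_
      · simpa [mC, hek] using hk
      · have : ((mC i lam y (w 0)).submatrix id e).submatrix (Fin.last i).succAbove
            (Fin.last i).succAbove = (vandermonde fun s : Fin i => lam (e s.castSucc))ᵀ := by
          ext a s
          have h1 : e s.castSucc ≠ k := by
            rw [← hek]
            intro h
            exact (Fin.castSucc_lt_last s).ne (he h)
          simp [mC, w, h1, vandermonde_apply]
        rw [this, det_transpose]
        apply det_vandermonde_ne_zero_iff.2
        intro s s' h
        exact Fin.castSucc_injective _ (he (hl h))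
    · intro a _ ha
      have : a.val < i := by
        have := a.2
        have h2 : a.val ≠ i := fun h => ha (Fin.ext h)
        omega
      simp [mC, this, hek, w]
    · simp
  have hev : ∀ᶠ t in nhdsWithin (0 : ℝ) {0}ᶜ,
      ((mC i lam y (w t)).submatrix id e).det ≠ 0 ∧ t ≠ 0 := by
    refine Filter.Eventually.and ?_ self_mem_nhdsWithin
    exact (hcont.continuousAt.eventually_ne h0).filter_mono nhdsWithin_le_nhds
  obtain ⟨t, ht, ht0⟩ := hev.exists
  refine ⟨w t, ?_⟩
  rw [hfac]
  refine mul_ne_zero ht (mV_det _ _ (hl.comp he) ?_)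
  intro s
  simp only [Function.comp, w, Set.mem_range_self, if_true]
  split_ifs
  · exact ht0
  · exact one_ne_zero

lemma mF_map {n : ℕ} (i : ℕ) (lam y w : Fin n → ℝ) :
    MvPolynomial.eval w (mF i (fun k => MvPolynomial.C (lam k)) (fun k => MvPolynomial.C (y k))
      (fun k => (MvPolynomial.X k : MvPolynomial (Fin n) ℝ))) = mF i lam y w := by
  rw [mF, RingHom.map_det, mF]
  congr 1
  ext a l
  simp only [RingHom.mapMatrix_apply, map_apply, mul_apply, map_sum, map_mul, transpose_apply]
  apply Finset.sum_congr rfl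
  intro k _
  congr 1
  · simp only [mC, of_apply]
    split_ifs <;> simp
  · simp [mV]

lemma exists_generic {n : ℕ} (lam : Fin n → ℝ) (hl : Function.Injective lam)
    (Y : Finset (Fin n → ℝ)) (hY : ∀ y ∈ Y, y ≠ 0) :
    ∃ w : Fin n → ℝ, (∀ k, w k ≠ 0) ∧ ∀ y ∈ Y, ∀ i : Fin n, mF i.val lam y w ≠ 0 := by
  let P : MvPolynomial (Fin n) ℝ := (∏ k, MvPolynomial.X k) *
    ∏ y ∈ Y, ∏ i : Fin n, mF i.val (fun k => MvPolynomial.C (lam k))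
      (fun k => MvPolynomial.C (y k)) (fun k => (MvPolynomial.X k : MvPolynomial (Fin n) ℝ))
  have hP : P ≠ 0 := by
    refine mul_ne_zero (Finset.prod_ne_zero_iff.2 fun k _ => MvPolynomial.X_ne_zero k)
      (Finset.prod_ne_zero_iff.2 fun y hy => Finset.prod_ne_zero_iff.2 fun i _ => ?_)
    intro h
    obtain ⟨w, hw⟩ := mF_ne lam hl i.val i.2 y (hY y hy)
    rw [← mF_map, h, map_zero] at hw
    exact hw rfl
  obtain ⟨w, hw⟩ : ∃ w, MvPolynomial.eval w P ≠ 0 := by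
    by_contra! h
    exact hP (MvPolynomial.funext fun x => by rw [h x, map_zero])
  simp only [P, map_mul, map_prod, mF_map, MvPolynomial.eval_X, mul_ne_zero_iff,
    Finset.prod_ne_zero_iff] at hw
  exact ⟨w, fun k => hw.1 k (Finset.mem_univ _), fun y hy i => hw.2 y hy i (Finset.mem_univ _)⟩

lemma exists_QR {n : ℕ} (V : Matrix (Fin n) (Fin n) ℝ) :
    ∃ U : Matrix (Fin n) (Fin n) ℝ, U * Uᵀ = 1 ∧ ∀ i j, i < j → (V * Uᵀ) i j = 0 := by
  let f : Fin n → EuclideanSpace ℝ (Fin n) := fun i => WithLp.toLp 2 (V i)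
  have hc : Module.finrank ℝ (EuclideanSpace ℝ (Fin n)) = Fintype.card (Fin n) := by simp
  let b := InnerProductSpace.gramSchmidtOrthonormalBasis hc f
  refine ⟨Matrix.of fun i => (b i).ofLp, ?_, ?_⟩
  · ext i j
    have := orthonormal_iff_ite.1 b.orthonormal j i
    rw [EuclideanSpace.inner_eq_star_dotProduct] at this
    rw [mul_apply, one_apply]
    simp only [eq_comm (a := j)] at this
    rw [← this]
    rfl
  · intro i j hij
    have := InnerProductSpace.gramSchmidtOrthonormalBasis_inv_triangular hc f hij
    rw [EuclideanSpace.inner_eq_star_dotProduct] at this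
    exact this

lemma path_realise {n : ℕ} (lam : Fin n → ℝ) (hl : Function.Injective lam)
    (Y : Finset (Fin n → ℝ)) (hY : ∀ y ∈ Y, y ≠ 0) :
    ∃ A U : Matrix (Fin n) (Fin n) ℝ,
          inS (SimpleGraph.pathGraph n) A ∧
          specMultiset A = Finset.univ.val.map lam ∧
          Uᵀ * U = 1 ∧ Uᵀ * A * U = Matrix.diagonal lam ∧
          ∀ y ∈ Y, ∀ i, U.mulVec y i ≠ 0 := by
  obtain ⟨w, hw, hF⟩ := exists_generic lam hl Y hY
  set V := mV n lam w with hV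
  have hVdet : V.det ≠ 0 := mV_det lam w hl hw
  obtain ⟨U, hU, hR⟩ := exists_QR V
  have hU' : Uᵀ * U = 1 := mul_eq_one_comm.1 hU
  set R := V * Uᵀ with hRdef
  have hUdet : Uᵀ.det ≠ 0 := by
    intro h
    have := congrArg det hU
    rw [det_mul, h, mul_zero, det_one] at this
    exact zero_ne_one this
  have hRdet : R.det ≠ 0 := by
    rw [hRdef, det_mul]
    exact mul_ne_zero hVdet hUdet
  have hRu : IsUnit R.det := isUnit_iff_ne_zero.2 hRdet
  have hRlow : R.BlockTriangular OrderDual.toDual := fun i j hij => hR i j hij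
  let _ : Invertible R := invertibleOfIsUnitDet R hRu
  have hLlow : R⁻¹.BlockTriangular OrderDual.toDual := blockTriangular_inv_of_blockTriangular hRlow
  set L := R⁻¹ with hLdef
  have hL : ∀ i j, i < j → L i j = 0 := fun i j hij => hLlow hij
  have hRd : ∀ i, R i i ≠ 0 := by
    rw [det_of_isLowerTriangular _ hRlow] at hRdet
    exact fun i => Finset.prod_ne_zero_iff.1 hRdet i (Finset.mem_univ _)
  have hLd : ∀ i, L i i ≠ 0 := by
    have h : L.det ≠ 0 := by
      intro h
      have := congrArg det (nonsing_inv_mul R hRu)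
      rw [det_mul, ← hLdef, h, zero_mul, det_one] at this
      exact zero_ne_one this
    rw [det_of_isLowerTriangular _ hLlow] at h
    exact fun i => Finset.prod_ne_zero_iff.1 h i (Finset.mem_univ _)
  have hVR : V = R * U := by rw [hRdef, Matrix.mul_assoc, hU', Matrix.mul_one]
  have hLV : U = L * V := by
    rw [hVR, ← Matrix.mul_assoc, hLdef, nonsing_inv_mul R hRu, Matrix.one_mul]
  set A := U * diagonal lam * Uᵀ with hA
  have hsymm : Aᵀ = A := by
    rw [hA, transpose_mul, transpose_mul, transpose_transpose, diagonal_transpose,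
      Matrix.mul_assoc]
  -- the shift
  have hshift : ∀ (a j : Fin n) (h : a.val + 1 < n),
      (V * diagonal lam * Uᵀ) a j = R ⟨a.val + 1, h⟩ j := by
    intro a j h
    rw [hRdef, mul_apply, mul_apply]
    apply Finset.sum_congr rfl
    intro k _
    rw [mul_diagonal]
    simp only [hV, mV, of_apply]
    ring
  have hAe : ∀ i j, A i j = ∑ a, L i a * (V * diagonal lam * Uᵀ) a j := by
    intro i j
    rw [← mul_apply, ← Matrix.mul_assoc, ← Matrix.mul_assoc, ← hLV]
  have hfar : ∀ i j : Fin n, i.val + 1 < j.val → A i j = 0 := by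
    intro i j hij
    rw [hAe]
    apply Finset.sum_eq_zero
    intro a _
    rcases lt_or_ge i a with h | h
    · rw [hL i a h, zero_mul]
    · have h' : a.val ≤ i.val := h
      rw [hshift a j (by omega), hR _ _ (by rw [Fin.lt_def]; simp only; omega), mul_zero]
  have hnear : ∀ i j : Fin n, i.val + 1 = j.val → A i j ≠ 0 := by
    intro i j hij
    rw [hAe, Finset.sum_eq_single i]
    · rw [hshift i j (by omega)]
      have : (⟨i.val + 1, by omega⟩ : Fin n) = j := Fin.ext hij
      rw [this]
      exact mul_ne_zero (hLd i) (hRd j)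
    · intro a _ ha
      rcases lt_or_ge i a with h | h
      · rw [hL i a h, zero_mul]
      · have h' : a.val < i.val := Fin.lt_def.1 (lt_of_le_of_ne h ha)
        rw [hshift a j (by omega), hR _ _ (by rw [Fin.lt_def]; simp only; omega), mul_zero]
    · simp
  have hsy : ∀ i j, A i j = A j i := fun i j => congrFun (congrFun hsymm j) i
  refine ⟨A, U, ⟨hsymm, ?_⟩, ?_, hU', ?_, ?_⟩
  · intro i j hij
    have hij' : i.val ≠ j.val := fun h => hij (Fin.ext h)
    rw [SimpleGraph.pathGraph_adj]
    constructor
    · intro h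
      by_contra hc
      push Not at hc
      rcases lt_or_gt_of_ne hij' with h1 | h1
      · exact h (hfar i j (by omega))
      · exact h (by rw [hsy]; exact hfar j i (by omega))
    · rintro (h | h)
      · exact hnear i j h
      · rw [hsy]; exact hnear j i h
  · rw [specMultiset, hA, Matrix.mul_assoc, charpoly_mul_comm, Matrix.mul_assoc, hU',
      Matrix.mul_one, charpoly_diagonal]
    have := Polynomial.roots_multiset_prod_X_sub_C (Finset.univ.val.map lam)
    rw [Multiset.map_map] at this
    exact this
  · rw [hA]
    calc Uᵀ * (U * diagonal lam * Uᵀ) * U = (Uᵀ * U) * diagonal lam * (Uᵀ * U) := by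
          simp only [Matrix.mul_assoc]
      _ = _ := by rw [hU', Matrix.one_mul, Matrix.mul_one]
  · intro y hy i h0
    let c : Fin (i.val + 1) → ℝ := fun l => L i (Fin.castLE i.2 l)
    have h1 : (mV (i.val + 1) lam w)ᵀ *ᵥ c = U i := by
      funext k
      have : U i k = ∑ l, L i l * V l k := by rw [← mul_apply, ← hLV]
      rw [this, mulVec, dotProduct]
      apply Fintype.sum_of_injective (Fin.castLE i.2) (Fin.castLE_injective _)
      · intro l hl'
        rw [hL, zero_mul]
        by_contra hc
        have hc' : l.val ≤ i.val := not_lt.1 hc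
        exact hl' ⟨⟨l.val, by omega⟩, rfl⟩
      · intro l
        simp [mV, hV, c, mul_comm]
    have h2 : (mC i.val lam y w * (mV (i.val + 1) lam w)ᵀ) *ᵥ c = 0 := by
      rw [← mulVec_mulVec, h1]
      funext a
      by_cases ha : a.val < i.val
      · have := hR ⟨a.val, by omega⟩ i ha
        rw [hRdef, mul_apply] at this
        rw [Pi.zero_apply, ← this, mulVec, dotProduct]
        apply Finset.sum_congr rfl
        intro k _
        simp [mC, hV, mV, ha]
      · rw [Pi.zero_apply, ← h0, mulVec, mulVec, dotProduct, dotProduct]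
        apply Finset.sum_congr rfl
        intro k _
        simp [mC, ha, mul_comm]
    have h3 := eq_zero_of_mulVec_eq_zero (hF y hy i) h2
    exact hLd i (congrFun h3 (Fin.last _))

/-- Corollary 2.6(1): the path `P_n` is generically realisable: any matrix
in `S(P_n)` has maximum eigenvalue multiplicity `1`, and every list of `n` distinct
eigenvalues is generically realisable for `P_n`. -/
theorem statement5 (n : ℕ) (hn : 1 ≤ n) :
    (∀ A : Matrix (Fin n) (Fin n) ℝ, inS (SimpleGraph.pathGraph n) A →
      ∀ μ : ℝ, Multiset.count μ (specMultiset A) ≤ 1) ∧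
    (∀ lam : Fin n → ℝ, StrictMono lam →
      ∀ Y : Finset (Fin n → ℝ), (∀ y ∈ Y, y ≠ 0) →
        ∃ A U : Matrix (Fin n) (Fin n) ℝ,
          inS (SimpleGraph.pathGraph n) A ∧
          specMultiset A = Finset.univ.val.map lam ∧
          Uᵀ * U = 1 ∧ Uᵀ * A * U = Matrix.diagonal lam ∧
          ∀ y ∈ Y, ∀ i, U.mulVec y i ≠ 0) := by
  exact ⟨fun A hA μ => path_simple hn A hA μ, fun lam hl Y hY => path_realise lam hl.injective Y hY⟩
end

section
/- Let G and H be simple graphs each of whose connected components is a path or a complete graph. Then q(G ∨ H) = 2 if and only if G and H have a pair of compatible multiplicity matrices. -/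
open Matrix Filter

/-- The interior rows of an `r`-row matrix: all rows except the first and the last. -/
def interiorRows (r : ℕ) : Finset (Fin r) :=
  Finset.univ.filter (fun j => j.val ≠ 0 ∧ j.val ≠ r - 1)

/-- Compatibility of two nonnegative integer matrices `V ∈ ℕ₀^{r×k}`, `W ∈ ℕ₀^{r×l}`
(for `r ≥ 3`): the interior row sums agree, and `ṼᵀW̃` is nowhere-zero. -/
def Compatible {r k l : ℕ} (V : Fin r → Fin k → ℕ) (W : Fin r → Fin l → ℕ) : Prop :=
  (∀ j ∈ interiorRows r, (∑ i, V j i) = ∑ i, W j i) ∧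
  (∀ a : Fin k, ∀ b : Fin l, (∑ j ∈ interiorRows r, V j a * W j b) ≠ 0)

/-- `col : Fin r → ℕ` is an ordered multiplicity list realised by a matrix in `S(G)`:
there are `λ₁ < … < λ_r` and `A ∈ S(G)` whose spectrum consists of each `λ_j` with
multiplicity `col j`. -/
def IsOrderedMultiplicityList {α : Type*} [Fintype α] [DecidableEq α]
    (G : SimpleGraph α) {r : ℕ} (col : Fin r → ℕ) : Prop :=
  ∃ lam : Fin r → ℝ, StrictMono lam ∧ ∃ A : Matrix α α ℝ, inS G A ∧
    specMultiset A =
      (Finset.univ.val : Multiset (Fin r)).bind (fun j => Multiset.replicate (col j) (lam j))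

lemma exists_generic_s6 {ι σ : Type*} [Fintype ι] (P : ι → MvPolynomial σ ℝ)
    (h : ∀ i, ∃ x : σ → ℝ, MvPolynomial.eval x (P i) ≠ 0) :
    ∃ x : σ → ℝ, ∀ i, MvPolynomial.eval x (P i) ≠ 0 := by
  by_contra hc
  push Not at hc
  have h0 : ∏ i, P i = 0 := by
    apply MvPolynomial.funext
    intro x
    obtain ⟨i, hi⟩ := hc x
    rw [map_prod, map_zero]
    exact Finset.prod_eq_zero (Finset.mem_univ i) hi
  obtain ⟨i, -, hi⟩ := Finset.prod_eq_zero_iff.1 h0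
  obtain ⟨x, hx⟩ := h i
  exact hx (by rw [hi, map_zero])

lemma spec_thm {n : Type*} [Fintype n] [DecidableEq n] (A : Matrix n n ℝ) (hA : A.IsSymm) :
    ∃ (d : n → ℝ) (U : Matrix n n ℝ), Uᵀ * U = 1 ∧ A = U * diagonal d * Uᵀ ∧
      specMultiset A = Finset.univ.val.map d := by
  have hH : A.IsHermitian := by
    rw [Matrix.IsHermitian, conjTranspose_eq_transpose_of_trivial]; exact hA
  refine ⟨hH.eigenvalues, hH.eigenvectorUnitary, ?_, ?_, ?_⟩
  · have := Unitary.coe_star_mul_self hH.eigenvectorUnitary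
    rwa [star_eq_conjTranspose, conjTranspose_eq_transpose_of_trivial] at this
  · have := hH.spectral_theorem
    rw [Unitary.conjStarAlgAut_apply] at this
    simpa [star_eq_conjTranspose, conjTranspose_eq_transpose_of_trivial, Function.comp_def] using this
  · unfold specMultiset
    rw [hH.roots_charpoly_eq_eigenvalues]
    simp [Function.comp_def]

lemma complete_generic {n : Type*} [Fintype n] [DecidableEq n] (d : n → ℝ)
    (hd : ∃ a b, d a ≠ d b) (Y : Finset (n → ℝ)) (hY : ∀ y ∈ Y, y ≠ 0) :
    ∃ U : Matrix n n ℝ, Uᵀ * U = 1 ∧ inS ⊤ (U * diagonal d * Uᵀ) ∧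
      ∀ y ∈ Y, ∀ i, (U *ᵥ y) i ≠ 0 := by
  obtain ⟨a, b, hab⟩ := hd
  let P : (Unit ⊕ n) ⊕ ({q : n × n // q.1 ≠ q.2} ⊕ (Y × n)) → MvPolynomial n ℝ :=
    Sum.elim (Sum.elim (fun _ => ∑ k, MvPolynomial.X k ^ 2) (fun i => MvPolynomial.X i))
      (Sum.elim (fun q => ∑ k, MvPolynomial.C (d q.1.1 + d q.1.2 - 2 * d k) * MvPolynomial.X k ^ 2)
      (fun q => MvPolynomial.C (q.1.1 q.2) * (∑ k, MvPolynomial.X k ^ 2) -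
        2 * MvPolynomial.X q.2 * ∑ k, MvPolynomial.C (q.1.1 k) * MvPolynomial.X k))
  obtain ⟨x, hx⟩ := exists_generic_s6 P (by
    rintro ((u | i) | (⟨⟨i, j⟩, hij⟩ | ⟨⟨y, hy⟩, i⟩))
    · exact ⟨Pi.single a 1, by simp [P, Pi.single_apply, ite_pow]⟩
    · exact ⟨fun _ => 1, by simp [P]⟩
    · have : ∃ k, d i + d j - 2 * d k ≠ 0 := by
        by_contra hc
        push Not at hc
        exact hab (by linarith [hc a, hc b])
      obtain ⟨k, hk⟩ := this
      exact ⟨Pi.single k 1, by simpa [P, Pi.single_apply, ite_pow] using hk⟩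
    · by_cases hi : y i = 0
      · obtain ⟨k, hk⟩ := Function.ne_iff.1 (hY y hy)
        have hki : k ≠ i := by rintro rfl; exact hk hi
        refine ⟨Pi.single i 1 + Pi.single k 1, ?_⟩
        simp [P, Pi.single_apply, hi, hki, hki.symm, mul_add, Finset.sum_add_distrib]
        simpa using hk
      · refine ⟨Pi.single i 1, ?_⟩
        simp [P, Pi.single_apply, ite_pow]
        intro h; apply hi; linarith)
  have hN : ∑ k, x k ^ 2 ≠ 0 := by simpa [P] using hx (Sum.inl (Sum.inl ()))
  have hxi : ∀ i, x i ≠ 0 := fun i => by simpa [P] using hx (Sum.inl (Sum.inr i))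
  have hq : ∀ i j, i ≠ j → ∑ k, (d i + d j - 2 * d k) * x k ^ 2 ≠ 0 := fun i j hij => by
    simpa [P] using hx (Sum.inr (Sum.inl ⟨⟨i, j⟩, hij⟩))
  have hy : ∀ y ∈ Y, ∀ i, y i * (∑ k, x k ^ 2) - 2 * x i * ∑ k, y k * x k ≠ 0 := fun y hy i => by
    simpa [P] using hx (Sum.inr (Sum.inr ⟨⟨y, hy⟩, i⟩))
  set N := ∑ k, x k ^ 2 with hNdef
  let U : Matrix n n ℝ := 1 - (2 / N) • vecMulVec x x
  have hNd : x ⬝ᵥ x = N := by simp [dotProduct, hNdef, sq]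
  have hUT : Uᵀ = U := by
    ext i j; simp [U, vecMulVec_apply, Matrix.one_apply, mul_comm, eq_comm]
  have hUapp : ∀ i j, U i j = (if i = j then 1 else 0) - 2 / N * (x i * x j) := fun i j => by
    simp [U, vecMulVec_apply, Matrix.one_apply]
  have hUU : U * U = 1 := by
    simp only [U, sub_mul, mul_sub, one_mul, mul_one, smul_mul_smul_comm, vecMulVec_mul_vecMulVec, hNd]
    ext i j
    simp [vecMulVec_apply]
    field_simp
    ring
  refine ⟨U, by rw [hUT, hUU], ⟨?_, ?_⟩, ?_⟩
  · rw [Matrix.IsSymm, transpose_mul, transpose_mul, transpose_transpose, diagonal_transpose, mul_assoc]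
  · intro i j hij
    simp only [SimpleGraph.top_adj, ne_eq, hij, not_false_eq_true, iff_true]
    have : (U * diagonal d * Uᵀ) i j =
        - (2 / N ^ 2) * (x i * x j) * ∑ k, (d i + d j - 2 * d k) * x k ^ 2 := by
      rw [hUT, Matrix.mul_apply]
      simp only [Matrix.mul_diagonal, hUapp]
      have e1 : ∀ k, ((if i = k then (1:ℝ) else 0) - 2 / N * (x i * x k)) * d k *
        ((if k = j then 1 else 0) - 2 / N * (x k * x j)) =
        (if i = k then (-(2 / N * (x k * x j)) * d k) else 0) +
        (if k = j then (-(2 / N * (x i * x k)) * d k) else 0) + (2/N)^2 * (x i * x j) * (d k * x k^2) := by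
        intro k
        by_cases h1 : i = k
        · subst h1
          simp [hij]; ring
        · by_cases h2 : k = j
          · subst h2; simp [h1]; ring
          · simp [h1, h2]; ring
      rw [Finset.sum_congr rfl (fun k _ => e1 k)]
      simp only [Finset.sum_add_distrib, Finset.sum_ite_eq, Finset.sum_ite_eq', Finset.mem_univ, if_true,
        ← Finset.mul_sum]
      have e2 : ∑ k, (d i + d j - 2 * d k) * x k ^ 2 = (d i + d j) * N - 2 * ∑ k, d k * x k ^ 2 := by
        rw [hNdef, Finset.mul_sum, Finset.mul_sum, ← Finset.sum_sub_distrib]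
        exact Finset.sum_congr rfl (fun k _ => by ring)
      rw [e2]
      field_simp
      ring
    rw [this]
    exact mul_ne_zero (mul_ne_zero (neg_ne_zero.2 (by positivity)) (mul_ne_zero (hxi i) (hxi j))) (hq i j hij)
  · intro y hyY i
    have : (U *ᵥ y) i = (y i * N - 2 * x i * ∑ k, y k * x k) / N := by
      simp only [mulVec, dotProduct, hUapp, sub_mul, Finset.sum_sub_distrib, ite_mul, one_mul, zero_mul,
        Finset.sum_ite_eq, Finset.mem_univ, if_true]
      have : ∑ k, 2 / N * (x i * x k) * y k = 2 / N * x i * ∑ k, y k * x k := by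
        rw [Finset.mul_sum]; exact Finset.sum_congr rfl (fun k _ => by ring)
      rw [this]; field_simp
    rw [this]
    exact div_ne_zero (hy y hyY i) hN

open Polynomial in
lemma poly_zero_of_roots {m : ℕ} {d : Fin m → ℝ} (hd : Function.Injective d) (p : ℝ[X])
    (S : Finset (Fin m)) (hp : p.natDegree < S.card) (h : ∀ s ∈ S, p.eval (d s) = 0) : p = 0 := by
  refine Polynomial.eq_zero_of_natDegree_lt_card_of_eval_eq_zero' p (S.image d) ?_ ?_
  · intro x hx
    obtain ⟨s, hs, rfl⟩ := Finset.mem_image.1 hx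
    exact h s hs
  · rwa [Finset.card_image_of_injective _ hd]

open Polynomial in
/-- orthogonal polynomials -/
lemma orth_poly {m : ℕ} {d : Fin m → ℝ} (hd : Function.Injective d) (w : Fin m → ℝ)
    (hw : ∀ s, w s ≠ 0) (i : ℕ) (hi : i < m) :
    ∃ p : ℝ[X], p.natDegree = i ∧ p ≠ 0 ∧ (∑ s, w s ^ 2 * p.eval (d s) ^ 2 = 1) ∧
      ∀ q : ℝ[X], q.degree < i → ∑ s, w s ^ 2 * (p.eval (d s) * q.eval (d s)) = 0 := by
  let φ : degreeLT ℝ (i + 1) →ₗ[ℝ] (Fin i → ℝ) :=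
    { toFun := fun p a => ∑ s, w s ^ 2 * ((p : ℝ[X]).eval (d s) * d s ^ (a : ℕ))
      map_add' := by
        intro p q; ext a
        simp only [Submodule.coe_add, eval_add, Pi.add_apply, ← Finset.sum_add_distrib]
        exact Finset.sum_congr rfl (fun s _ => by ring)
      map_smul' := by
        intro c p; ext a
        simp only [Submodule.coe_smul, eval_smul, Pi.smul_apply, smul_eq_mul, RingHom.id_apply, Finset.mul_sum]
        exact Finset.sum_congr rfl (fun s _ => by ring) }
  have hker : LinearMap.ker φ ≠ ⊥ := by
    apply LinearMap.ker_ne_bot_of_finrank_lt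
    rw [LinearEquiv.finrank_eq (degreeLTEquiv ℝ (i + 1))]
    simp
  obtain ⟨⟨p, hpd⟩, hpk, hp0⟩ := Submodule.exists_mem_ne_zero_of_ne_bot hker
  have hp0 : p ≠ 0 := by rintro rfl; exact hp0 rfl
  have hpa : ∀ a : ℕ, a < i → ∑ s, w s ^ 2 * (p.eval (d s) * d s ^ a) = 0 := fun a ha =>
    congrFun (LinearMap.mem_ker.1 hpk) ⟨a, ha⟩
  have hdeg : p.natDegree < i + 1 := by
    rw [mem_degreeLT] at hpd
    exact (natDegree_lt_iff_degree_lt hp0).2 hpd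
  have horth : ∀ q : ℝ[X], q.degree < i → ∑ s, w s ^ 2 * (p.eval (d s) * q.eval (d s)) = 0 := by
    intro q hq
    by_cases hq0 : q = 0
    · simp [hq0]
    have hq' := (natDegree_lt_iff_degree_lt hq0).2 hq
    have : ∀ s, w s ^ 2 * (p.eval (d s) * q.eval (d s)) =
        ∑ a ∈ Finset.range i, q.coeff a * (w s ^ 2 * (p.eval (d s) * d s ^ a)) := by
      intro s
      rw [eval_eq_sum_range' hq', Finset.mul_sum, Finset.mul_sum]
      exact Finset.sum_congr rfl (fun a _ => by ring)
    rw [Finset.sum_congr rfl (fun s _ => this s), Finset.sum_comm]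
    refine Finset.sum_eq_zero (fun a ha => ?_)
    rw [← Finset.mul_sum, hpa a (Finset.mem_range.1 ha), mul_zero]
  have hnn : ∀ s, 0 ≤ w s ^ 2 * p.eval (d s) ^ 2 := fun s => by positivity
  have hpos : ∑ s, w s ^ 2 * p.eval (d s) ^ 2 ≠ 0 := by
    intro h
    rw [Finset.sum_eq_zero_iff_of_nonneg (fun s _ => hnn s)] at h
    apply hp0
    refine poly_zero_of_roots hd p Finset.univ (by simp; omega) (fun s hs => ?_)
    have := h s hs
    simpa [hw s] using this
  have hdeg' : p.natDegree = i := by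
    by_contra hne
    apply hpos
    have := horth p ((natDegree_lt_iff_degree_lt hp0).1 (by omega))
    rw [← this]
    exact Finset.sum_congr rfl (fun s _ => by ring)
  set N := ∑ s, w s ^ 2 * p.eval (d s) ^ 2
  have hNp : 0 < N := lt_of_le_of_ne (Finset.sum_nonneg (fun s _ => hnn s)) (Ne.symm hpos)
  have hc : (√N)⁻¹ ≠ 0 := inv_ne_zero (Real.sqrt_ne_zero'.2 hNp)
  refine ⟨C (√N)⁻¹ * p, ?_, ?_, ?_, ?_⟩
  · rw [natDegree_C_mul hc, hdeg']
  · exact mul_ne_zero (by simpa using hc) hp0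
  · have : ∀ s, w s ^ 2 * (C (√N)⁻¹ * p).eval (d s) ^ 2 = N⁻¹ * (w s ^ 2 * p.eval (d s) ^ 2) := by
      intro s
      rw [eval_mul, eval_C, mul_pow, inv_pow, Real.sq_sqrt hNp.le]; ring
    rw [Finset.sum_congr rfl (fun s _ => this s), ← Finset.mul_sum]
    exact inv_mul_cancel₀ hpos
  · intro q hq
    have : ∀ s, w s ^ 2 * ((C (√N)⁻¹ * p).eval (d s) * q.eval (d s)) =
        (√N)⁻¹ * (w s ^ 2 * (p.eval (d s) * q.eval (d s))) := by
      intro s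
      rw [eval_mul, eval_C]; ring
    rw [Finset.sum_congr rfl (fun s _ => this s), ← Finset.mul_sum, horth q hq, mul_zero]

/-- the Gram-type matrix controlling genericity -/
noncomputable def gramN {m : ℕ} (d y : Fin m → ℝ) (i : ℕ) :
    Matrix (Fin (i + 1)) (Fin (i + 1)) (MvPolynomial (Fin m) ℝ) :=
  fun a b => if a.val < i then ∑ s, MvPolynomial.C (d s ^ (a.val + b.val)) * MvPolynomial.X s ^ 2
    else ∑ s, MvPolynomial.C (y s * d s ^ b.val) * MvPolynomial.X s

open Polynomial in
lemma gramN_mulVec {m : ℕ} (d y w : Fin m → ℝ) (i : ℕ) (p : ℝ[X]) (hp : p.natDegree < i + 1)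
    (a : Fin (i + 1)) :
    (((MvPolynomial.eval w).mapMatrix (gramN d y i)) *ᵥ (fun b => p.coeff b)) a =
      if a.val < i then ∑ s, w s ^ 2 * (d s ^ a.val * p.eval (d s))
      else ∑ s, w s * p.eval (d s) * y s := by
  have hev : ∀ x, p.eval x = ∑ b : Fin (i + 1), p.coeff b * x ^ (b : ℕ) := fun x => by
    rw [eval_eq_sum_range' hp, Finset.sum_range]
  simp only [mulVec, dotProduct, RingHom.mapMatrix_apply, Matrix.map_apply, gramN, hev]
  split_ifs with h
  · simp only [map_sum, map_mul, MvPolynomial.eval_C, map_pow, MvPolynomial.eval_X, Finset.sum_mul, Finset.mul_sum]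
    rw [Finset.sum_comm]
    exact Finset.sum_congr rfl fun s _ => Finset.sum_congr rfl fun b _ => by ring
  · simp only [map_sum, map_mul, MvPolynomial.eval_C, map_pow, MvPolynomial.eval_X, Finset.sum_mul, Finset.mul_sum]
    rw [Finset.sum_comm]
    exact Finset.sum_congr rfl fun s _ => Finset.sum_congr rfl fun b _ => by ring

open Polynomial in
lemma gramN_det {m : ℕ} {d : Fin m → ℝ} (hd : Function.Injective d) (y : Fin m → ℝ) (hy : y ≠ 0)
    (i : ℕ) (hi : i < m) : ∃ w : Fin m → ℝ, MvPolynomial.eval w (gramN d y i).det ≠ 0 := by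
  obtain ⟨j0, hj0⟩ := Function.ne_iff.1 hy
  have hj0 : y j0 ≠ 0 := hj0
  obtain ⟨T, hT, hTc⟩ := Finset.exists_subset_card_eq (s := Finset.univ.erase j0) (n := i)
    (by rw [Finset.card_erase_of_mem (Finset.mem_univ _)]; simp; omega)
  have hjT : j0 ∉ T := fun h => by simpa using hT h
  have hinjT : Set.InjOn d T := hd.injOn
  let K : ℝ := ∑ t ∈ T, y t * (Lagrange.basis T d t).eval (d j0)
  obtain ⟨ε, hε0, hεK⟩ : ∃ ε : ℝ, ε ≠ 0 ∧ y j0 - ε * K ≠ 0 := by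
    by_cases h : y j0 - 1 * K = 0
    · refine ⟨2, two_ne_zero, fun h2 => hj0 ?_⟩
      linarith
    · exact ⟨1, one_ne_zero, h⟩
  let w : Fin m → ℝ := fun s => if s = j0 then ε else if s ∈ T then 1 else 0
  have hwsum : ∀ (F : Fin m → ℝ) , (∑ s, w s * F s = ε * F j0 + ∑ t ∈ T, F t) ∧
      (∑ s, w s ^ 2 * F s = ε ^ 2 * F j0 + ∑ t ∈ T, F t) := by
    intro F
    constructor
    · rw [← Finset.add_sum_erase _ _ (Finset.mem_univ j0)]
      congr 1
      · simp [w]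
      · rw [← Finset.sum_subset hT]
        · refine Finset.sum_congr rfl fun t ht => ?_
          have : t ≠ j0 := by rintro rfl; exact hjT ht
          simp [w, this, ht]
        · intro s hs hsT
          simp [w, hsT, Finset.ne_of_mem_erase hs]
    · rw [← Finset.add_sum_erase _ _ (Finset.mem_univ j0)]
      congr 1
      · simp [w]
      · rw [← Finset.sum_subset hT]
        · refine Finset.sum_congr rfl fun t ht => ?_
          have : t ≠ j0 := by rintro rfl; exact hjT ht
          simp [w, this, ht]
        · intro s hs hsT
          simp [w, hsT, Finset.ne_of_mem_erase hs]
  refine ⟨w, ?_⟩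
  rw [RingHom.map_det]
  intro hdet
  obtain ⟨c, hc0, hc⟩ := Matrix.exists_mulVec_eq_zero_iff.2 hdet
  let p : ℝ[X] := ∑ b : Fin (i + 1), C (c b) * X ^ (b : ℕ)
  have hpdeg : p.degree < (i + 1 : ℕ) := by
    refine (degree_sum_le _ _).trans_lt ?_
    rw [Finset.sup_lt_iff (by exact_mod_cast WithBot.bot_lt_coe _)]
    intro b _
    refine (degree_C_mul_X_pow_le _ _).trans_lt ?_
    exact_mod_cast b.2
  have hpcoeff : (fun b : Fin (i + 1) => p.coeff b) = c := by
    ext b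
    simp [p, coeff_X_pow, Fin.val_inj]
  have hp0 : p ≠ 0 := by
    intro h; apply hc0; rw [← hpcoeff, h]; ext; simp
  have hpn : p.natDegree < i + 1 := (natDegree_lt_iff_degree_lt hp0).2 hpdeg
  have hrow := fun a => gramN_mulVec d y w i p hpn a
  rw [hpcoeff, hc] at hrow
  have hr1 : ∀ a : ℕ, a < i → ∑ s, w s ^ 2 * (d s ^ a * p.eval (d s)) = 0 := fun a ha => by
    have := hrow ⟨a, by omega⟩
    simpa [ha] using this.symm
  have hr2 : ∑ s, w s * (p.eval (d s) * y s) = 0 := by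
    have := hrow ⟨i, by omega⟩
    simpa [mul_assoc] using this.symm
  have horth : ∀ q : ℝ[X], q.degree < i → ∑ s, w s ^ 2 * (q.eval (d s) * p.eval (d s)) = 0 := by
    intro q hq
    by_cases hq0 : q = 0
    · simp [hq0]
    have hq' := (natDegree_lt_iff_degree_lt hq0).2 hq
    have : ∀ s, w s ^ 2 * (q.eval (d s) * p.eval (d s)) =
        ∑ a ∈ Finset.range i, q.coeff a * (w s ^ 2 * (d s ^ a * p.eval (d s))) := by
      intro s
      rw [eval_eq_sum_range' hq', Finset.sum_mul, Finset.mul_sum]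
      exact Finset.sum_congr rfl (fun a _ => by ring)
    rw [Finset.sum_congr rfl (fun s _ => this s), Finset.sum_comm]
    refine Finset.sum_eq_zero (fun a ha => ?_)
    rw [← Finset.mul_sum, hr1 a (Finset.mem_range.1 ha), mul_zero]
  have hpt : ∀ t ∈ T, p.eval (d t) = - ε ^ 2 * (Lagrange.basis T d t).eval (d j0) * p.eval (d j0) := by
    intro t ht
    have h1 := horth (Lagrange.basis T d t) (by
      rw [Lagrange.degree_basis hinjT ht, hTc]
      have : 0 < i := by rw [← hTc]; exact Finset.card_pos.2 ⟨t, ht⟩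
      exact_mod_cast (by omega : i - 1 < i))
    rw [(hwsum _).2, Finset.sum_eq_single t] at h1
    · rw [Lagrange.eval_basis_self hinjT ht] at h1
      linarith
    · intro s hs hst
      rw [Lagrange.eval_basis_of_ne hst.symm hs, zero_mul]
    · intro h; exact absurd ht h
  have hpj : p.eval (d j0) = 0 := by
    rw [(hwsum _).1] at hr2
    have : ∑ t ∈ T, p.eval (d t) * y t = - ε ^ 2 * p.eval (d j0) * K := by
      rw [Finset.mul_sum]
      refine Finset.sum_congr rfl fun t ht => ?_
      rw [hpt t ht]; ring
    rw [this] at hr2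
    have h3 : (ε * (y j0 - ε * K)) * p.eval (d j0) = 0 := by linarith
    exact (mul_eq_zero.1 h3).resolve_left (mul_ne_zero hε0 hεK)
  apply hp0
  refine poly_zero_of_roots hd p (insert j0 T) ?_ ?_
  · rw [Finset.card_insert_of_notMem hjT, hTc]; exact hpn
  · intro s hs
    rcases Finset.mem_insert.1 hs with rfl | hs
    · exact hpj
    · rw [hpt s hs, hpj, mul_zero]

open Polynomial in
lemma path_generic {m : ℕ} (d : Fin m → ℝ) (hd : Function.Injective d)
    (Y : Finset (Fin m → ℝ)) (hY : ∀ y ∈ Y, y ≠ 0) :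
    ∃ U : Matrix (Fin m) (Fin m) ℝ, Uᵀ * U = 1 ∧
      inS (SimpleGraph.pathGraph m) (U * diagonal d * Uᵀ) ∧
      ∀ y ∈ Y, ∀ i, (U *ᵥ y) i ≠ 0 := by
  let P : (Fin m) ⊕ (Y × Fin m) → MvPolynomial (Fin m) ℝ :=
    Sum.elim (fun i => MvPolynomial.X i) (fun q => (gramN d q.1.1 q.2.val).det)
  obtain ⟨w, hw⟩ := exists_generic_s6 P (by
    rintro (i | ⟨⟨y, hy⟩, i⟩)
    · exact ⟨fun _ => 1, by simp [P]⟩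
    · exact gramN_det hd y (hY y hy) i.val i.2)
  have hw0 : ∀ s, w s ≠ 0 := fun s => by simpa [P] using hw (Sum.inl s)
  have hwN : ∀ y ∈ Y, ∀ i : Fin m, MvPolynomial.eval w (gramN d y i.val).det ≠ 0 := fun y hy i =>
    hw (Sum.inr ⟨⟨y, hy⟩, i⟩)
  choose p hpdeg hp0 hpn hporth using fun i : Fin m => orth_poly hd w hw0 i.val i.2
  have hdeg : ∀ i, (p i).degree = (i.val : ℕ) := fun i => by
    rw [degree_eq_natDegree (hp0 i), hpdeg]
  let U : Matrix (Fin m) (Fin m) ℝ := Matrix.of fun i s => w s * (p i).eval (d s)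
  have hUapp : ∀ i s, U i s = w s * (p i).eval (d s) := fun _ _ => rfl
  have hip : ∀ i j : Fin m, i ≠ j → ∑ s, w s ^ 2 * ((p i).eval (d s) * (p j).eval (d s)) = 0 := by
    intro i j hij
    rcases lt_or_gt_of_ne hij with h | h
    · have := hporth j (p i) (by rw [hdeg]; exact_mod_cast h)
      rw [← this]; exact Finset.sum_congr rfl fun s _ => by ring
    · exact hporth i (p j) (by rw [hdeg]; exact_mod_cast h)
  have hUU : U * Uᵀ = 1 := by
    ext i j
    rw [Matrix.mul_apply, Matrix.one_apply]
    simp only [transpose_apply, hUapp]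
    split_ifs with h
    · subst h
      rw [← hpn i]; exact Finset.sum_congr rfl fun s _ => by ring
    · rw [← hip i j h]; exact Finset.sum_congr rfl fun s _ => by ring
  have hA : ∀ i j, (U * diagonal d * Uᵀ) i j =
      ∑ s, w s ^ 2 * ((p i).eval (d s) * (X * p j).eval (d s)) := by
    intro i j
    rw [Matrix.mul_apply]
    simp only [Matrix.mul_diagonal, transpose_apply, hUapp, eval_mul, eval_X]
    exact Finset.sum_congr rfl fun s _ => by ring
  have hsymm : (U * diagonal d * Uᵀ).IsSymm := by
    rw [Matrix.IsSymm, transpose_mul, transpose_mul, transpose_transpose, diagonal_transpose, mul_assoc]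
  have hdX : ∀ j, (X * p j).degree = ((j.val + 1 : ℕ) : WithBot ℕ) := fun j => by
    rw [degree_mul, degree_X, hdeg, add_comm]; norm_cast
  have hfar : ∀ i j : Fin m, j.val + 1 < i.val → (U * diagonal d * Uᵀ) i j = 0 := by
    intro i j h
    rw [hA]
    exact hporth i _ (by rw [hdX]; exact_mod_cast h)
  have hnear : ∀ i j : Fin m, j.val + 1 = i.val → (U * diagonal d * Uᵀ) i j ≠ 0 := by
    intro i j h
    rw [hA]
    let α : ℝ := (p j).leadingCoeff / (p i).leadingCoeff
    have hli : (p i).leadingCoeff ≠ 0 := leadingCoeff_ne_zero.2 (hp0 i)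
    have hlj : (p j).leadingCoeff ≠ 0 := leadingCoeff_ne_zero.2 (hp0 j)
    have hα : α ≠ 0 := div_ne_zero hlj hli
    have hq : (X * p j - C α * p i).degree < ((i.val : ℕ) : WithBot ℕ) := by
      have h1 : (X * p j).degree = ((i.val : ℕ) : WithBot ℕ) := by rw [hdX, h]
      rw [← h1]
      apply degree_sub_lt_left
      · rw [h1, degree_C_mul hα, hdeg]
      · exact mul_ne_zero X_ne_zero (hp0 j)
      · rw [leadingCoeff_mul, leadingCoeff_mul, leadingCoeff_X, leadingCoeff_C, one_mul]
        exact (div_mul_cancel₀ _ hli).symm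
    have h2 := hporth i _ hq
    have h3 : ∑ s, w s ^ 2 * ((p i).eval (d s) * (X * p j).eval (d s)) = α := by
      have h4 : ∀ s, w s ^ 2 * ((p i).eval (d s) * (X * p j).eval (d s)) =
          w s ^ 2 * ((p i).eval (d s) * (X * p j - C α * p i).eval (d s)) +
          α * (w s ^ 2 * (p i).eval (d s) ^ 2) := by
        intro s; simp only [eval_sub, eval_mul, eval_C, eval_X]; ring
      rw [Finset.sum_congr rfl (fun s _ => h4 s), Finset.sum_add_distrib, h2, ← Finset.mul_sum, hpn]
      ring
    rw [h3]; exact hα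
  refine ⟨U, mul_eq_one_comm.1 hUU, ⟨hsymm, ?_⟩, ?_⟩
  · intro i j hij
    rw [SimpleGraph.pathGraph_adj]
    constructor
    · intro h
      by_contra hc
      push Not at hc
      have hij' : i.val ≠ j.val := fun h => hij (Fin.ext h)
      rcases lt_or_gt_of_ne hij' with hl | hl
      · rw [← hsymm.apply] at h
        exact h (hfar j i (by omega))
      · exact h (hfar i j (by omega))
    · rintro (h | h)
      · rw [← hsymm.apply]; exact hnear j i h
      · exact hnear i j h
  · intro y hy i h
    apply hwN y hy i
    rw [RingHom.map_det]
    apply Matrix.exists_mulVec_eq_zero_iff.1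
    have hn : (p i).natDegree < i.val + 1 := by rw [hpdeg]; omega
    refine ⟨fun b => (p i).coeff b, ?_, ?_⟩
    · intro h0
      have := congrFun h0 ⟨i.val, by omega⟩
      apply hp0 i
      rw [← leadingCoeff_eq_zero, leadingCoeff, hpdeg]
      exact this
    · ext a
      rw [gramN_mulVec d y w i.val (p i) hn a]
      split_ifs with ha
      · have := hporth i (X ^ a.val) (by rw [degree_X_pow]; exact_mod_cast ha)
        rw [Pi.zero_apply, ← this]
        exact Finset.sum_congr rfl fun s _ => by rw [eval_pow, eval_X]; ring
      · exact h

lemma orth_conj_inv {n : Type*} [Fintype n] [DecidableEq n] {A U : Matrix n n ℝ} {d : n → ℝ}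
    (hU : Uᵀ * U = 1) (hA : A = U * diagonal d * Uᵀ) : A * U = U * diagonal d := by
  rw [hA, mul_assoc, hU, mul_one]

lemma nonconst {n : Type*} [Fintype n] [DecidableEq n] {A U : Matrix n n ℝ} {d : n → ℝ}
    (hU : Uᵀ * U = 1) (hA : A = U * diagonal d * Uᵀ) {i j : n} (hij : i ≠ j) (h : A i j ≠ 0) :
    ∃ a b, d a ≠ d b := by
  by_contra hc
  push Not at hc
  apply h
  have h1 : diagonal d = d i • (1 : Matrix n n ℝ) := by
    ext a b
    by_cases hab : a = b
    · subst hab; simp [hc a i]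
    · simp [hab]
  have hU' : U * Uᵀ = 1 := mul_eq_one_comm.1 hU
  rw [hA, h1]
  simp [hU', hij]

lemma path_simple_s6 {m : ℕ} {A U : Matrix (Fin m) (Fin m) ℝ} {d : Fin m → ℝ}
    (hU : Uᵀ * U = 1) (hA : A = U * diagonal d * Uᵀ) (hS : inS (SimpleGraph.pathGraph m) A) :
    Function.Injective d := by
  have key : ∀ (z : Fin m → ℝ) (t : ℝ), A *ᵥ z = t • z → (∀ i : Fin m, i.val = 0 → z i = 0) → z = 0 := by
    intro z t hz h0
    have : ∀ n : ℕ, ∀ i : Fin m, i.val ≤ n → z i = 0 := by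
      intro n
      induction n with
      | zero => intro i hi; exact h0 i (by omega)
      | succ n ih =>
        intro i hi
        by_cases hin : i.val ≤ n
        · exact ih i hin
        have hi' : i.val = n + 1 := by omega
        let j : Fin m := ⟨n, by omega⟩
        have hrow := congrFun hz j
        have hji : j ≠ i := by intro h; have := congrArg Fin.val h; simp [j] at this; omega
        rw [Pi.smul_apply, ih j le_rfl, smul_zero] at hrow
        simp only [mulVec, dotProduct] at hrow
        rw [Finset.sum_eq_single i] at hrow
        · refine (mul_eq_zero.1 hrow).resolve_left ?_
          refine (hS.2 j i hji).2 ?_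
          rw [SimpleGraph.pathGraph_adj]
          left; simp [j, hi']
        · intro b _ hbi
          by_cases hb : b.val ≤ n
          · rw [ih b hb, mul_zero]
          · have hbi' : b.val ≠ i.val := fun h => hbi (Fin.ext h)
            have hjb : j ≠ b := by intro h; apply hb; rw [← h]
            have : A j b = 0 := by
              by_contra hne
              rw [← ne_eq, hS.2 j b hjb, SimpleGraph.pathGraph_adj] at hne
              simp only [j] at hne
              omega
            rw [this, zero_mul]
        · intro h; exact absurd (Finset.mem_univ _) h
    ext i; exact this i.val i le_rfl
  have hAU := orth_conj_inv hU hA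
  have hcol : ∀ x, A *ᵥ (fun i => U i x) = d x • (fun i => U i x) := by
    intro x; ext i
    have := congrFun (congrFun hAU i) x
    rw [Matrix.mul_apply, Matrix.mul_diagonal] at this
    simp only [mulVec, dotProduct, Pi.smul_apply, smul_eq_mul]
    rw [this, mul_comm]
  have hUij : ∀ x y, ∑ i, U i x * U i y = if x = y then 1 else 0 := by
    intro x y
    have := congrFun (congrFun hU x) y
    rw [Matrix.mul_apply, Matrix.one_apply] at this
    simpa using this
  intro x y hxy
  by_contra hne
  have hm : 0 < m := by have := x.2; omega
  let o : Fin m := ⟨0, hm⟩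
  have ho : ∀ i : Fin m, i.val = 0 → i = o := fun i hi => Fin.ext hi
  let z : Fin m → ℝ := U o y • (fun i => U i x) - U o x • (fun i => U i y)
  have hz : z = 0 := by
    refine key z (d x) ?_ ?_
    · simp only [z, mulVec_sub, mulVec_smul, hcol, ← hxy]
      rw [smul_sub, smul_comm (d x), smul_comm (d x)]
    · intro i hi
      rw [ho i hi]; simp [z]; ring
  have hU0 : U o y = 0 := by
    have h1 : ∑ i, U i x * z i = 0 := by simp [hz]
    have h2 : ∑ i, U i x * z i = U o y * ∑ i, U i x * U i x - U o x * ∑ i, U i x * U i y := by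
      rw [Finset.mul_sum, Finset.mul_sum, ← Finset.sum_sub_distrib]
      refine Finset.sum_congr rfl fun i _ => ?_
      simp [z]; ring
    rw [h2, hUij, hUij] at h1
    simpa [hne] using h1
  have := key (fun i => U i y) (d y) (hcol y) (fun i hi => by rw [ho i hi]; exact hU0)
  have h1 := hUij y y
  simp only [if_true] at h1
  have h2 : ∀ i, U i y = 0 := fun i => congrFun this i
  simp [h2] at h1

lemma mult_extract {m r : ℕ} (G : SimpleGraph (Fin m)) (hG : G = SimpleGraph.pathGraph m ∨ G = ⊤)
    (col : Fin r → ℕ) (h : IsOrderedMultiplicityList G col) :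
    ∃ d : Fin m → Fin r, (∀ j, (Finset.univ.filter (fun x => d x = j)).card = col j) ∧
      ∀ lam : Fin r → ℝ, Function.Injective lam → ∀ Y : Finset (Fin m → ℝ), (∀ y ∈ Y, y ≠ 0) →
        ∃ U : Matrix (Fin m) (Fin m) ℝ, Uᵀ * U = 1 ∧ inS G (U * diagonal (lam ∘ d) * Uᵀ) ∧
          ∀ y ∈ Y, ∀ i, (U *ᵥ y) i ≠ 0 := by
  obtain ⟨lam, hlam, A, hAS, hspec⟩ := h
  obtain ⟨e, U, hU, hA, he⟩ := spec_thm A hAS.1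
  rw [he] at hspec
  have hex : ∀ x, ∃ j, lam j = e x := by
    intro x
    have : e x ∈ Finset.univ.val.map e := Multiset.mem_map_of_mem _ (Finset.mem_univ x)
    rw [hspec, Multiset.mem_bind] at this
    obtain ⟨j, -, hj⟩ := this
    exact ⟨j, (Multiset.eq_of_mem_replicate hj).symm⟩
  choose d hd using hex
  refine ⟨d, ?_, ?_⟩
  · intro j
    have h1 := congrArg (Multiset.count (lam j)) hspec
    rw [Multiset.count_map, Multiset.count_bind] at h1
    have h2 : (Multiset.map (fun b => Multiset.count (lam j) (Multiset.replicate (col b) (lam b)))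
        (Finset.univ.val : Multiset (Fin r))).sum = col j := by
      change ∑ b, Multiset.count (lam j) (Multiset.replicate (col b) (lam b)) = col j
      rw [Finset.sum_eq_single j]
      · simp
      · intro b _ hb
        rw [Multiset.count_replicate, if_neg]
        exact fun h => hb (hlam.injective h)
      · simp
    rw [h2] at h1
    rw [← h1]
    change _ = (Finset.univ.filter (fun a => lam j = e a)).card
    congr 1
    ext x
    simp only [Finset.mem_filter, Finset.mem_univ, true_and, ← hd x]
    exact ⟨fun h => by rw [h], fun h => (hlam.injective h).symm⟩
  · intro lam' hlam' Y hY
    rcases hG with rfl | rfl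
    · refine path_generic _ (hlam'.comp ?_) Y hY
      have := path_simple_s6 hU hA hAS
      intro x y hxy
      apply this
      rw [← hd, ← hd, hxy]
    · by_cases hs : ∃ i j : Fin m, i ≠ j
      · obtain ⟨i, j, hij⟩ := hs
        obtain ⟨a, b, hab⟩ := nonconst hU hA hij ((hAS.2 i j hij).2 hij)
        refine complete_generic _ ⟨a, b, fun h => hab ?_⟩ Y hY
        rw [← hd a, ← hd b, hlam' h]
      · push Not at hs
        obtain ⟨U, h1, h2, h3⟩ := path_generic (lam' ∘ d) (fun a b _ => hs a b) Y hY
        exact ⟨U, h1, ⟨h2.1, fun i j hij => absurd (hs i j) hij⟩, h3⟩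

lemma block_Q {β : Type*} [Fintype β] [DecidableEq β] (g : β → ℝ) :
    ∃ Q : Matrix β β ℝ, Qᵀ * Q = 1 ∧ ∀ y y', Q y y' ≠ 0 ↔ g y = g y' := by
  let P : β ⊕ (β ⊕ β) → MvPolynomial β ℝ :=
    Sum.elim (fun i => MvPolynomial.X i)
      (Sum.elim (fun i => ∑ k, (if g k = g i then MvPolynomial.X k ^ 2 else 0))
        (fun i => (∑ k, (if g k = g i then MvPolynomial.X k ^ 2 else 0)) - 2 * MvPolynomial.X i ^ 2))
  obtain ⟨w, hw⟩ := exists_generic_s6 P (by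
    rintro (i | i | i)
    · exact ⟨fun _ => 1, by simp [P]⟩
    · refine ⟨Pi.single i 1, ?_⟩
      simp only [P, Sum.elim_inr, Sum.elim_inl, map_sum, apply_ite (MvPolynomial.eval _), map_zero,
        map_pow, MvPolynomial.eval_X]
      rw [Finset.sum_eq_single i]
      · simp
      · intro b _ hb; simp [hb]
      · simp
    · refine ⟨Pi.single i 1, ?_⟩
      simp only [P, Sum.elim_inr, map_sum, apply_ite (MvPolynomial.eval _), map_zero,
        map_pow, MvPolynomial.eval_X, map_sub, map_mul]
      rw [Finset.sum_eq_single i]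
      · simp; norm_num
      · intro b _ hb; simp [hb]
      · simp)
  have h1 : ∀ i, w i ≠ 0 := fun i => by simpa [P] using hw (Sum.inl i)
  let N : β → ℝ := fun i => ∑ k, (if g k = g i then w k ^ 2 else 0)
  have h2 : ∀ i, N i ≠ 0 := fun i => by
    have := hw (Sum.inr (Sum.inl i))
    simpa only [P, Sum.elim_inr, Sum.elim_inl, map_sum, apply_ite (MvPolynomial.eval _), map_zero,
        map_pow, MvPolynomial.eval_X] using this
  have h3 : ∀ i, N i - 2 * w i ^ 2 ≠ 0 := fun i => by
    have := hw (Sum.inr (Sum.inr i))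
    simpa [P, Sum.elim_inr, Sum.elim_inl, map_sum, apply_ite (MvPolynomial.eval _), map_zero,
        map_pow, MvPolynomial.eval_X] using this
  have hNc : ∀ i j, g i = g j → N i = N j := fun i j h => by simp only [N, h]
  let Q : Matrix β β ℝ := Matrix.of fun y y' =>
    if g y = g y' then (if y = y' then 1 else 0) - 2 / N y * (w y * w y') else 0
  have hQ : ∀ y y', Q y y' =
    if g y = g y' then (if y = y' then 1 else 0) - 2 / N y * (w y * w y') else 0 := fun _ _ => rfl
  refine ⟨Q, ?_, ?_⟩
  · ext y y'
    rw [Matrix.mul_apply, Matrix.one_apply]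
    simp only [transpose_apply]
    by_cases hyy : g y = g y'
    · have e : ∀ k, Q k y * Q k y' =
        (if k = y then (if k = y' then 1 else 0) - 2 / N y * (w k * w y') else 0) +
        (if k = y' then - (2 / N y * (w k * w y)) else 0) +
        (2 / N y) ^ 2 * (w y * w y') * (if g k = g y then w k ^ 2 else 0) := by
        intro k
        rw [hQ, hQ, ← hyy]
        by_cases hk : g k = g y
        · rw [hNc k y hk]
          simp only [hk, if_true]
          by_cases h4 : k = y
          · by_cases h5 : k = y'
            · simp only [h4, h5, if_true]; rw [← h4, h5]; simp; ring
            · simp only [h4, if_true]; rw [← h4]; simp [h5]; ring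
          · by_cases h5 : k = y'
            · simp [h4, h5]; rw [← h5]; simp [h4]; ring
            · simp [h4, h5]; ring
        · have h4 : k ≠ y := by rintro rfl; exact hk rfl
          have h5 : k ≠ y' := by rintro rfl; exact hk hyy.symm
          simp [hk, h4, h5]
      rw [Finset.sum_congr rfl fun k _ => e k]
      simp only [Finset.sum_add_distrib, Finset.sum_ite_eq', Finset.mem_univ, if_true, ← Finset.mul_sum]
      change _ + (2 / N y) ^ 2 * (w y * w y') * N y = _
      have := h2 y
      split_ifs
      · field_simp; ring
      · field_simp; ring
    · have hne : y ≠ y' := by rintro rfl; exact hyy rfl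
      rw [if_neg hne]
      refine Finset.sum_eq_zero fun k _ => ?_
      rw [hQ, hQ]
      by_cases hk : g k = g y
      · rw [if_neg (c := g k = g y') (by rw [hk]; exact hyy), mul_zero]
      · rw [if_neg hk, zero_mul]
  · intro y y'
    rw [hQ]
    by_cases hyy : g y = g y'
    · simp only [hyy, if_true, iff_true]
      have := h2 y
      by_cases h : y = y'
      · subst h
        have h4 := h3 y
        simp only [if_true]
        intro h5
        apply h4
        field_simp at h5
        linarith
      · simp only [h, if_false, zero_sub, ne_eq, neg_eq_zero]
        exact mul_ne_zero (by positivity) (mul_ne_zero (h1 y) (h1 y'))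
    · simp [hyy]

lemma sum_subtype_aux {α : Type*} [Fintype α] (F : α → ℝ) (p : α → Prop) [Fintype {x // p x}]
    (h : ∀ x, ¬ p x → F x = 0) : ∑ x, F x = ∑ x : {x // p x}, F x.1 := by
  classical
  rw [← Finset.sum_subtype (Finset.univ.filter p) (by simp) F, Finset.sum_filter]
  refine Finset.sum_congr rfl fun x _ => ?_
  split_ifs with hx
  · rfl
  · exact h x hx

lemma exists_M {α β : Type*} [Fintype α] [DecidableEq α] [Fintype β] [DecidableEq β]
    (f : α → ℝ) (g : β → ℝ) (hf : ∀ x, |f x| ≤ 1) (hg : ∀ y, |g y| ≤ 1)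
    (hc : ∀ t : ℝ, |t| < 1 → (Finset.univ.filter (fun x => f x = t)).card =
      (Finset.univ.filter (fun y => g y = t)).card) :
    ∃ M : Matrix α β ℝ, M * Mᵀ = diagonal (fun x => 1 - f x ^ 2) ∧
      Mᵀ * M = diagonal (fun y => 1 - g y ^ 2) ∧ diagonal f * M = M * diagonal g ∧
      ∀ x y, |f x| < 1 → f x = g y → M x y ≠ 0 := by
  have hcard : ∀ c : ℝ, Nonempty ({a : {x : α // |f x| < 1} // f a.1 = c} ≃
      {b : {y : β // |g y| < 1} // g b.1 = c}) := by
    intro c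
    by_cases h : |c| < 1
    · have e1 : {a : {x : α // |f x| < 1} // f a.1 = c} ≃ {x : α // f x = c} :=
        { toFun := fun a => ⟨a.1.1, a.2⟩
          invFun := fun x => ⟨⟨x.1, by rw [x.2]; exact h⟩, x.2⟩
          left_inv := fun _ => rfl
          right_inv := fun _ => rfl }
      have e2 : {a : {x : β // |g x| < 1} // g a.1 = c} ≃ {x : β // g x = c} :=
        { toFun := fun a => ⟨a.1.1, a.2⟩
          invFun := fun x => ⟨⟨x.1, by rw [x.2]; exact h⟩, x.2⟩
          left_inv := fun _ => rfl
          right_inv := fun _ => rfl }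
      have e3 : Fintype.card {x : α // f x = c} = Fintype.card {x : β // g x = c} := by
        rw [Fintype.card_subtype, Fintype.card_subtype]; exact hc c h
      exact ⟨e1.trans ((Fintype.equivOfCardEq e3).trans e2.symm)⟩
    · have : IsEmpty {a : {x : α // |f x| < 1} // f a.1 = c} :=
        ⟨fun a => h (by rw [← a.2]; exact a.1.2)⟩
      have : IsEmpty {a : {x : β // |g x| < 1} // g a.1 = c} :=
        ⟨fun a => h (by rw [← a.2]; exact a.1.2)⟩
      exact ⟨Equiv.equivOfIsEmpty _ _⟩
  let e : {x : α // |f x| < 1} ≃ {y : β // |g y| < 1} :=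
    Equiv.ofFiberEquiv (f := fun a => f a.1) (g := fun b => g b.1) (fun c => (hcard c).some)
  have he : ∀ a, g (e a).1 = f a.1 := fun a =>
    Equiv.ofFiberEquiv_map (f := fun a : {x : α // |f x| < 1} => f a.1)
      (g := fun b : {y : β // |g y| < 1} => g b.1) (fun c => (hcard c).some) a
  obtain ⟨Q, hQ, hQ0⟩ := block_Q g
  have hQ' : Q * Qᵀ = 1 := mul_eq_one_comm.1 hQ
  have hone : ∀ t : ℝ, |t| ≤ 1 → ¬ |t| < 1 → 1 - t ^ 2 = 0 := by
    intro t h1 h2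
    have : |t| = 1 := le_antisymm h1 (not_lt.1 h2)
    rw [← sq_abs, this]; norm_num
  have hpos : ∀ t : ℝ, |t| < 1 → 0 < 1 - t ^ 2 := by
    intro t h
    have := (sq_lt_one_iff_abs_lt_one t).2 h
    linarith
  let M : Matrix α β ℝ := Matrix.of fun x y =>
    if h : |f x| < 1 then √(1 - f x ^ 2) * Q (e ⟨x, h⟩).1 y else 0
  have hM1 : ∀ x y (h : |f x| < 1), M x y = √(1 - f x ^ 2) * Q (e ⟨x, h⟩).1 y := fun x y h => by
    change dite _ _ _ = _
    rw [dif_pos h]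
  have hM2 : ∀ x y (h : ¬ |f x| < 1), M x y = 0 := fun x y h => by
    change dite _ _ _ = _
    rw [dif_neg h]
  refine ⟨M, ?_, ?_, ?_, ?_⟩
  · ext x x'
    rw [Matrix.mul_apply, Matrix.diagonal_apply]
    simp only [transpose_apply]
    by_cases h : |f x| < 1
    · by_cases h' : |f x'| < 1
      · simp only [hM1 x _ h, hM1 x' _ h']
        have h1 := congrFun (congrFun hQ' (e ⟨x, h⟩).1) (e ⟨x', h'⟩).1
        rw [Matrix.mul_apply, Matrix.one_apply] at h1
        simp only [transpose_apply] at h1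
        have h2 : ∀ y, √(1 - f x ^ 2) * Q (e ⟨x, h⟩).1 y * (√(1 - f x' ^ 2) * Q (e ⟨x', h'⟩).1 y) =
          √(1 - f x ^ 2) * √(1 - f x' ^ 2) * (Q (e ⟨x, h⟩).1 y * Q (e ⟨x', h'⟩).1 y) := fun y => by ring
        rw [Finset.sum_congr rfl fun y _ => h2 y, ← Finset.mul_sum, h1]
        by_cases hx : x = x'
        · subst hx
          simp [Real.mul_self_sqrt (hpos _ h).le]
        · have : (e ⟨x, h⟩).1 ≠ (e ⟨x', h'⟩).1 := by
            intro h3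
            have := e.injective (Subtype.ext h3)
            exact hx (congrArg Subtype.val this)
          simp [this, hx]
      · have hx : x ≠ x' := by rintro rfl; exact h' h
        rw [if_neg hx]
        exact Finset.sum_eq_zero fun y _ => by rw [hM2 x' y h', mul_zero]
    · rw [Finset.sum_eq_zero fun y _ => by rw [hM2 x y h, zero_mul], hone _ (hf x) h]
      simp
  · ext y y'
    rw [Matrix.mul_apply, Matrix.diagonal_apply]
    simp only [transpose_apply]
    have s1 : ∑ x, M x y * M x y' = ∑ x : {x : α // |f x| < 1}, M x.1 y * M x.1 y' := by
      exact sum_subtype_aux (fun x => M x y * M x y') (fun x => |f x| < 1) fun x h => by rw [hM2 x y h, zero_mul]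
    have s2 : ∑ z, (1 - g z ^ 2) * (Q z y * Q z y') =
        ∑ z : {z : β // |g z| < 1}, (1 - g z.1 ^ 2) * (Q z.1 y * Q z.1 y') := by
      exact sum_subtype_aux (fun z => (1 - g z ^ 2) * (Q z y * Q z y')) (fun z => |g z| < 1) fun x h => by rw [hone _ (hg x) h, zero_mul]
    have s3 : ∑ x, M x y * M x y' = ∑ z, (1 - g z ^ 2) * (Q z y * Q z y') := by
      rw [s1, s2, ← e.sum_comp]
      refine Finset.sum_congr rfl fun x _ => ?_
      rw [hM1 x.1 y x.2, hM1 x.1 y' x.2, he]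
      have := Real.mul_self_sqrt (hpos _ x.2).le
      calc _ = (√(1 - f x.1 ^ 2) * √(1 - f x.1 ^ 2)) * (Q (e x).1 y * Q (e x).1 y') := by ring
        _ = _ := by rw [this]
    have s4 : ∑ z, (1 - g z ^ 2) * (Q z y * Q z y') = (1 - g y ^ 2) * ∑ z, Q z y * Q z y' := by
      rw [Finset.mul_sum]
      refine Finset.sum_congr rfl fun z _ => ?_
      by_cases h : Q z y = 0
      · rw [h]; ring
      · rw [(hQ0 z y).1 h]
    have h1 := congrFun (congrFun hQ y) y'
    rw [Matrix.mul_apply, Matrix.one_apply] at h1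
    simp only [transpose_apply] at h1
    rw [s3, s4, h1]
    simp
  · ext x y
    rw [Matrix.diagonal_mul, Matrix.mul_diagonal]
    by_cases h : |f x| < 1
    · by_cases h0 : Q (e ⟨x, h⟩).1 y = 0
      · rw [hM1 x y h, h0]; ring
      · have h1 := (hQ0 _ _).1 h0
        rw [he] at h1
        rw [← h1, mul_comm]
    · rw [hM2 x y h]; ring
  · intro x y h hxy
    rw [hM1 x y h]
    refine mul_ne_zero (Real.sqrt_ne_zero'.2 (hpos _ h)) ((hQ0 _ _).2 ?_)
    rw [he, hxy]

section graphs
variable {α β : Type*}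

lemma join_ll (G : SimpleGraph α) (H : SimpleGraph β) (a b : α) :
    (graphJoin G H).Adj (Sum.inl a) (Sum.inl b) ↔ G.Adj a b := by
  simp only [graphJoin, partialJoin]
  constructor
  · rintro (⟨a', b', h, h1, h2⟩ | ⟨a', b', h, h1, h2⟩ | ⟨a', h, b', h1, h2⟩ | ⟨a', h, b', h1, h2⟩)
    · cases h1; cases h2; exact h
    · cases h1
    · cases h2
    · cases h1
  · exact fun h => Or.inl ⟨a, b, h, rfl, rfl⟩

lemma join_rr (G : SimpleGraph α) (H : SimpleGraph β) (a b : β) :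
    (graphJoin G H).Adj (Sum.inr a) (Sum.inr b) ↔ H.Adj a b := by
  simp only [graphJoin, partialJoin]
  constructor
  · rintro (⟨a', b', h, h1, h2⟩ | ⟨a', b', h, h1, h2⟩ | ⟨a', h, b', h1, h2⟩ | ⟨a', h, b', h1, h2⟩)
    · cases h1
    · cases h1; cases h2; exact h
    · cases h1
    · cases h2
  · exact fun h => Or.inr (Or.inl ⟨a, b, h, rfl, rfl⟩)

lemma join_lr (G : SimpleGraph α) (H : SimpleGraph β) (a : α) (b : β) :
    (graphJoin G H).Adj (Sum.inl a) (Sum.inr b) :=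
  Or.inr (Or.inr (Or.inl ⟨a, Set.mem_univ _, b, rfl, rfl⟩))

lemma join_inS (G : SimpleGraph α) (H : SimpleGraph β) (B : Matrix α α ℝ) (C : Matrix α β ℝ)
    (D : Matrix β β ℝ) (hB : inS G B) (hD : inS H D) (hC : ∀ x y, C x y ≠ 0) :
    inS (graphJoin G H) (fromBlocks B C Cᵀ D) := by
  constructor
  · rw [Matrix.isSymm_fromBlocks_iff]
    exact ⟨hB.1, rfl, by simp, hD.1⟩
  · rintro (i | i) (j | j) hij
    · rw [join_ll]
      exact hB.2 i j (fun h => hij (by rw [h]))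
    · simp [hC, join_lr]
    · simp [hC, (join_lr G H j i).symm]
    · rw [join_rr]
      exact hD.2 i j (fun h => hij (by rw [h]))

end graphs

lemma sigma_adj {ι : Type*} {α : ι → Type*} (G : ∀ i, SimpleGraph (α i)) (i : ι) (a b : α i) :
    (sigmaGraph G).Adj ⟨i, a⟩ ⟨i, b⟩ ↔ (G i).Adj a b := by
  simp only [sigmaGraph]
  constructor
  · rintro ⟨i', a', b', h, h1, h2⟩
    cases h1; cases h2; exact h
  · exact fun h => ⟨i, a, b, h, rfl, rfl⟩

lemma sigma_not_adj {ι : Type*} {α : ι → Type*} (G : ∀ i, SimpleGraph (α i)) {i j : ι} (h : i ≠ j)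
    (a : α i) (b : α j) : ¬ (sigmaGraph G).Adj ⟨i, a⟩ ⟨j, b⟩ := by
  rintro ⟨i', a', b', -, h1, h2⟩
  cases h1; cases h2; exact h rfl

lemma sigma_inS {ι : Type*} [DecidableEq ι] {α : ι → Type*} (G : ∀ i, SimpleGraph (α i))
    (B : ∀ i, Matrix (α i) (α i) ℝ) (hB : ∀ i, inS (G i) (B i)) :
    inS (sigmaGraph G) (blockDiagonal' B) := by
  constructor
  · rw [Matrix.IsSymm, blockDiagonal'_transpose]
    congr 1; ext1 i; exact (hB i).1
  · rintro ⟨i, a⟩ ⟨j, b⟩ hab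
    by_cases hij : i = j
    · subst hij
      rw [blockDiagonal'_apply_eq, sigma_adj]
      exact (hB i).2 a b (fun h => hab (by rw [h]))
    · rw [blockDiagonal'_apply_ne _ _ _ hij]
      simp [sigma_not_adj G hij]

lemma neg_inS {α : Type*} (G : SimpleGraph α) (B : Matrix α α ℝ) (h : inS G B) : inS G (-B) := by
  refine ⟨h.1.neg, fun i j hij => ?_⟩
  simpa using h.2 i j hij

lemma qMat_ge {n : Type*} [Fintype n] [DecidableEq n] (G : SimpleGraph n) (A : Matrix n n ℝ)
    (hA : inS G A) {i j : n} (hij : G.Adj i j) : 2 ≤ qMat A := by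
  obtain ⟨d, U, hU, hAU, hs⟩ := spec_thm A hA.1
  obtain ⟨a, b, hab⟩ := nonconst hU hAU hij.ne ((hA.2 i j hij.ne).2 hij)
  unfold qMat
  rw [hs]
  refine Finset.one_lt_card.2 ⟨d a, ?_, d b, ?_, hab⟩ <;> simp

lemma qMat_le {n : Type*} [Fintype n] [DecidableEq n] (A : Matrix n n ℝ)
    (hA : A.IsSymm) (hAA : A * A = 1) : qMat A ≤ 2 := by
  obtain ⟨d, U, hU, hAU, hs⟩ := spec_thm A hA
  have hU' : U * Uᵀ = 1 := mul_eq_one_comm.1 hU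
  have h1 : diagonal d * diagonal d = 1 := by
    have : Uᵀ * (A * A) * U = diagonal d * diagonal d := by
      have e := orth_conj_inv hU hAU
      rw [mul_assoc, mul_assoc, e, ← mul_assoc A, e, mul_assoc U, ← mul_assoc Uᵀ, hU, one_mul]
    rw [← this, hAA, mul_one, hU]
  have h2 : ∀ a, d a = 1 ∨ d a = -1 := by
    intro a
    have := congrFun (congrFun h1 a) a
    simp at this
    exact mul_self_eq_one_iff.1 this
  unfold qMat
  rw [hs]
  refine (Finset.card_le_card (t := {1, -1}) ?_).trans Finset.card_le_two
  intro t ht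
  simp at ht ⊢
  obtain ⟨a, rfl⟩ := ht
  exact h2 a

lemma qGraph_two {n : Type*} [Fintype n] [DecidableEq n] (G : SimpleGraph n) (A : Matrix n n ℝ)
    (hA : inS G A) (hAA : A * A = 1) {i j : n} (hij : G.Adj i j) : qGraph G = 2 := by
  unfold qGraph
  apply le_antisymm
  · have : qMat A ∈ {q | ∃ A : Matrix n n ℝ, inS G A ∧ qMat A = q} := ⟨A, hA, rfl⟩
    exact (Nat.sInf_le this).trans (qMat_le A hA.1 hAA)
  · have hne : {q | ∃ A : Matrix n n ℝ, inS G A ∧ qMat A = q}.Nonempty := ⟨_, A, hA, rfl⟩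
    obtain ⟨A', hA', h'⟩ := Nat.sInf_mem hne
    rw [← h']
    exact qMat_ge G A' hA' hij

lemma blockDiagonal'_mul_apply' {ι κ : Type*} [Fintype ι] [DecidableEq ι] {α : ι → Type*}
    [∀ i, Fintype (α i)] (U : ∀ i, Matrix (α i) (α i) ℝ) (M : Matrix (Σ i, α i) κ ℝ)
    (a : ι) (x : α a) (q : κ) :
    (blockDiagonal' U * M) ⟨a, x⟩ q = ∑ x', U a x x' * M ⟨a, x'⟩ q := by
  rw [Matrix.mul_apply, Fintype.sum_sigma, Finset.sum_eq_single a]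
  · simp
  · intro b _ hb
    exact Finset.sum_eq_zero fun z _ => by rw [blockDiagonal'_apply_ne _ _ _ hb.symm, zero_mul]
  · simp

lemma card_sigma_filter {k : ℕ} {m : Fin k → ℕ} {γ : Type*} [DecidableEq γ]
    (f : ∀ a, Fin (m a) → γ) (t : γ) :
    (Finset.univ.filter (fun q : Σ a, Fin (m a) => f q.1 q.2 = t)).card =
      ∑ a, (Finset.univ.filter (fun x => f a x = t)).card := by
  simp only [Finset.card_filter]
  rw [Fintype.sum_sigma]

lemma block_orth {ι : Type*} [Fintype ι] [DecidableEq ι] {α : ι → Type*}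
    [∀ i, Fintype (α i)] [∀ i, DecidableEq (α i)] (U : ∀ i, Matrix (α i) (α i) ℝ)
    (h : ∀ i, (U i)ᵀ * U i = 1) : (blockDiagonal' U)ᵀ * blockDiagonal' U = 1 := by
  rw [blockDiagonal'_transpose, ← blockDiagonal'_mul]
  simp only [h]
  exact blockDiagonal'_one

lemma block_conj {ι : Type*} [Fintype ι] [DecidableEq ι] {α : ι → Type*}
    [∀ i, Fintype (α i)] [∀ i, DecidableEq (α i)] (U : ∀ i, Matrix (α i) (α i) ℝ)
    (d : ∀ i, α i → ℝ) :
    blockDiagonal' U * diagonal (fun q : Σ i, α i => d q.1 q.2) * (blockDiagonal' U)ᵀ =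
      blockDiagonal' (fun i => U i * diagonal (d i) * (U i)ᵀ) := by
  rw [blockDiagonal'_transpose, ← blockDiagonal'_diagonal, ← blockDiagonal'_mul, ← blockDiagonal'_mul]

lemma backward (k l : ℕ) (hk : 1 ≤ k) (hl : 1 ≤ l)
    (m : Fin k → ℕ) (p : Fin l → ℕ) (hm : ∀ i, 1 ≤ m i) (hp : ∀ j, 1 ≤ p j)
    (G : ∀ i, SimpleGraph (Fin (m i))) (H : ∀ j, SimpleGraph (Fin (p j)))
    (hG : ∀ i, G i = SimpleGraph.pathGraph (m i) ∨ G i = ⊤)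
    (hH : ∀ j, H j = SimpleGraph.pathGraph (p j) ∨ H j = ⊤)
    (r : ℕ) (hr : 3 ≤ r) (V : Fin r → Fin k → ℕ) (W : Fin r → Fin l → ℕ)
    (hV : ∀ i, IsOrderedMultiplicityList (G i) (fun j => V j i))
    (hW : ∀ i, IsOrderedMultiplicityList (H i) (fun j => W j i))
    (hc : Compatible V W) :
    qGraph (graphJoin (sigmaGraph G) (sigmaGraph H)) = 2 := by
  choose d hd hdU using fun i => mult_extract (G i) (hG i) _ (hV i)
  choose e he heU using fun i => mult_extract (H i) (hH i) _ (hW i)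
  have hr1 : (0 : ℝ) < r - 1 := by
    have : (3 : ℝ) ≤ r := by exact_mod_cast hr
    linarith
  let lam : Fin r → ℝ := fun j => -1 + 2 * (j.val : ℝ) / (r - 1)
  have hlam : Function.Injective lam := by
    intro a b hab
    simp only [lam] at hab
    have h1 : 2 * (a.val : ℝ) / (r - 1) = 2 * (b.val : ℝ) / (r - 1) := by linarith
    field_simp at h1
    exact Fin.ext (by exact_mod_cast h1)
  have hle : ∀ j : Fin r, (j.val : ℝ) ≤ r - 1 := fun j => by
    have : j.val + 1 ≤ r := j.2
    have : ((j.val + 1 : ℕ) : ℝ) ≤ r := by exact_mod_cast this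
    push_cast at this; linarith
  have hlam1 : ∀ j, |lam j| ≤ 1 := by
    intro j
    rw [abs_le]
    have h1 : 0 ≤ 2 * (j.val : ℝ) / (r - 1) := by positivity
    have h2 : 2 * (j.val : ℝ) / (r - 1) ≤ 2 := by
      rw [div_le_iff₀ hr1]; linarith [hle j]
    constructor <;> simp only [lam] <;> linarith
  have hlami : ∀ j, |lam j| < 1 ↔ j ∈ interiorRows r := by
    intro j
    simp only [interiorRows, Finset.mem_filter, Finset.mem_univ, true_and]
    constructor
    · intro h
      constructor
      · intro h0
        simp [lam, h0] at h
      · intro h0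
        have : (j.val : ℝ) = r - 1 := by
          rw [h0, Nat.cast_sub (by omega)]; simp
        have h2 : lam j = 1 := by
          simp only [lam, this]; field_simp; norm_num
        rw [h2] at h; simp at h
    · rintro ⟨h1, h2⟩
      have h3 : (0 : ℝ) < j.val := by exact_mod_cast Nat.pos_of_ne_zero h1
      have h4 : (j.val : ℝ) < r - 1 := by
        have : j.val + 1 < r := by have := j.2; omega
        have : ((j.val + 1 : ℕ) : ℝ) < r := by exact_mod_cast this
        push_cast at this; linarith
      rw [abs_lt]
      have h5 : 0 < 2 * (j.val : ℝ) / (r - 1) := by positivity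
      have h6 : 2 * (j.val : ℝ) / (r - 1) < 2 := by
        rw [div_lt_iff₀ hr1]; linarith
      constructor <;> simp only [lam] <;> linarith
  let f : (Σ a, Fin (m a)) → ℝ := fun q => (lam ∘ d q.1) q.2
  let g : (Σ b, Fin (p b)) → ℝ := fun q => (lam ∘ e q.1) q.2
  obtain ⟨M, hM1, hM2, hM3, hM4⟩ := exists_M f g (fun _ => hlam1 _) (fun _ => hlam1 _) (by
    intro t ht
    by_cases hex : ∃ j, lam j = t
    · obtain ⟨j, rfl⟩ := hex
      have hj := (hlami j).1 ht
      have e1 := card_sigma_filter d j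
      have e2 := card_sigma_filter e j
      simp only [hd, he] at e1 e2
      rw [hc.1 j hj, ← e2] at e1
      simpa [f, g, hlam.eq_iff] using e1
    · push Not at hex
      simp [f, g, hex])
  have hx0 : ∀ a b, ∃ x y, M ⟨a, x⟩ ⟨b, y⟩ ≠ 0 := by
    intro a b
    obtain ⟨j, hj, hjn⟩ := Finset.exists_ne_zero_of_sum_ne_zero (hc.2 a b)
    have h1 : V j a ≠ 0 := left_ne_zero_of_mul hjn
    have h2 : W j b ≠ 0 := right_ne_zero_of_mul hjn
    rw [← hd a j, Finset.card_ne_zero] at h1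
    rw [← he b j, Finset.card_ne_zero] at h2
    obtain ⟨x, hx⟩ := h1
    obtain ⟨y, hy⟩ := h2
    have hx : d a x = j := by simpa using hx
    have hy : e b y = j := by simpa using hy
    refine ⟨x, y, hM4 _ _ ?_ ?_⟩
    · simp only [f, Function.comp, hx]; exact (hlami j).2 hj
    · simp [f, g, hx, hy]
  choose x0 y0 hxy0 using hx0
  have hUb := fun b => heU b lam hlam
    (Finset.univ.image (fun a => fun y => M ⟨a, x0 a b⟩ ⟨b, y⟩)) (by
      intro y hy
      obtain ⟨a, -, rfl⟩ := Finset.mem_image.1 hy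
      exact fun h => hxy0 a b (congrFun h (y0 a b)))
  choose Ub hUb1 hUb2 hUb3 using hUb
  have hUb3' : ∀ b a y, ∑ y', Ub b y y' * M ⟨a, x0 a b⟩ ⟨b, y'⟩ ≠ 0 := fun b a y =>
    hUb3 b _ (Finset.mem_image_of_mem _ (Finset.mem_univ a)) y
  have hUa := fun a => hdU a lam hlam
    (Finset.univ.image (fun q : Σ b, Fin (p b) => fun x => ∑ y', Ub q.1 q.2 y' * M ⟨a, x⟩ ⟨q.1, y'⟩)) (by
      intro y hy
      obtain ⟨⟨b, z⟩, -, rfl⟩ := Finset.mem_image.1 hy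
      exact fun h => hUb3' b a z (congrFun h (x0 a b)))
  choose Ua hUa1 hUa2 hUa3 using hUa
  have hUa3' : ∀ a x b y, ∑ x', Ua a x x' * (∑ y', Ub b y y' * M ⟨a, x'⟩ ⟨b, y'⟩) ≠ 0 := fun a x b y =>
    hUa3 a _ (Finset.mem_image_of_mem _ (Finset.mem_univ (⟨b, y⟩ : Σ b, Fin (p b)))) x
  set U := blockDiagonal' Ua with hU
  set U' := blockDiagonal' Ub with hU'
  have hUU : Uᵀ * U = 1 := block_orth Ua hUa1
  have hUU' : U'ᵀ * U' = 1 := block_orth Ub hUb1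
  have hUU2 : U * Uᵀ = 1 := mul_eq_one_comm.1 hUU
  have hUU2' : U' * U'ᵀ = 1 := mul_eq_one_comm.1 hUU'
  let B := U * diagonal f * Uᵀ
  let D := U' * diagonal g * U'ᵀ
  let C := U * M * U'ᵀ
  have hB : inS (sigmaGraph G) B := by
    have := block_conj Ua (fun a => lam ∘ d a)
    change inS _ (blockDiagonal' Ua * diagonal (fun q : Σ i, Fin (m i) => (lam ∘ d q.1) q.2) * (blockDiagonal' Ua)ᵀ)
    rw [this]
    exact sigma_inS G _ hUa2
  have hD : inS (sigmaGraph H) D := by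
    have := block_conj Ub (fun a => lam ∘ e a)
    change inS _ (blockDiagonal' Ub * diagonal (fun q : Σ i, Fin (p i) => (lam ∘ e q.1) q.2) * (blockDiagonal' Ub)ᵀ)
    rw [this]
    exact sigma_inS H _ hUb2
  have hC : ∀ x y, C x y ≠ 0 := by
    rintro ⟨a, x⟩ ⟨b, y⟩
    have h1 : C = U * (U' * Mᵀ)ᵀ := by
      simp only [C, transpose_mul, transpose_transpose, Matrix.mul_assoc]
    rw [h1, hU, blockDiagonal'_mul_apply']
    simp only [transpose_apply, hU', blockDiagonal'_mul_apply']
    exact hUa3' a x b y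
  have hCT : Cᵀ = U' * Mᵀ * Uᵀ := by
    simp only [C, transpose_mul, transpose_transpose, Matrix.mul_assoc]
  refine qGraph_two _ (fromBlocks B C Cᵀ (-D)) (join_inS _ _ _ _ _ hB (neg_inS _ _ hD) hC) ?_
    (join_lr _ _ ⟨⟨0, hk⟩, ⟨0, hm _⟩⟩ ⟨⟨0, hl⟩, ⟨0, hp _⟩⟩)
  have hcan : ∀ {κ : Type} (X : Matrix (Σ a, Fin (m a)) κ ℝ), Uᵀ * (U * X) = X := fun X => by
    rw [← Matrix.mul_assoc, hUU, Matrix.one_mul]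
  have hcan' : ∀ {κ : Type} (X : Matrix (Σ b, Fin (p b)) κ ℝ), U'ᵀ * (U' * X) = X := fun X => by
    rw [← Matrix.mul_assoc, hUU', Matrix.one_mul]
  have r11 : B * B + C * Cᵀ = 1 := by
    have : B * B + C * Cᵀ = U * (diagonal f * diagonal f + M * Mᵀ) * Uᵀ := by
      simp only [B, C, transpose_mul, transpose_transpose, Matrix.mul_assoc, hcan, hcan', Matrix.mul_add, Matrix.add_mul]
    rw [this, hM1, diagonal_mul_diagonal, diagonal_add]
    have : (fun i => f i * f i + (1 - f i ^ 2)) = fun _ => 1 := by ext i; ring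
    rw [this, diagonal_one, Matrix.mul_one, hUU2]
  have r12 : B * C = C * D := by
    have h1 : B * C = U * (diagonal f * M) * U'ᵀ := by simp only [B, C, Matrix.mul_assoc, hcan]
    have h2 : C * D = U * (M * diagonal g) * U'ᵀ := by simp only [D, C, Matrix.mul_assoc, hcan']
    rw [h1, h2, hM3]
  have r21 : Cᵀ * B = D * Cᵀ := by
    have := congrArg transpose r12
    rw [transpose_mul B C, transpose_mul C D, hB.1, hD.1] at this
    exact this
  have r22 : Cᵀ * C + D * D = 1 := by
    have : Cᵀ * C + D * D = U' * (Mᵀ * M + diagonal g * diagonal g) * U'ᵀ := by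
      simp only [D, C, transpose_mul, transpose_transpose, Matrix.mul_assoc, hcan, hcan', Matrix.mul_add, Matrix.add_mul]
    rw [this, hM2, diagonal_mul_diagonal, diagonal_add]
    have : (fun i => (1 - g i ^ 2) + g i * g i) = fun _ => 1 := by ext i; ring
    rw [this, diagonal_one, Matrix.mul_one, hUU2']
  rw [fromBlocks_multiply, r11, r12, r21]
  simp only [Matrix.mul_neg, Matrix.neg_mul, neg_neg, r22, add_neg_cancel]
  exact fromBlocks_one

lemma exists_invol {n : Type*} [Fintype n] [DecidableEq n] (G : SimpleGraph n) (h : qGraph G = 2) :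
    ∃ A : Matrix n n ℝ, inS G A ∧ A * A = 1 := by
  unfold qGraph at h
  have hne : {q | ∃ A : Matrix n n ℝ, inS G A ∧ qMat A = q}.Nonempty :=
    Nat.nonempty_of_sInf_eq_succ h
  obtain ⟨A, hA, hq⟩ := Nat.sInf_mem hne
  rw [h] at hq
  obtain ⟨d, U, hU, hAU, hs⟩ := spec_thm A hA.1
  have hU' : U * Uᵀ = 1 := mul_eq_one_comm.1 hU
  unfold qMat at hq
  rw [hs, Finset.card_eq_two] at hq
  obtain ⟨α, β, hab, hset⟩ := hq
  have hd : ∀ i, d i = α ∨ d i = β := by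
    intro i
    have : d i ∈ (Multiset.map d Finset.univ.val).toFinset := by simp
    rw [hset] at this
    simpa using this
  have hba : β - α ≠ 0 := sub_ne_zero.2 hab.symm
  let c := 2 / (β - α)
  let s := (α + β) / (β - α)
  have hA' : c • A - s • (1 : Matrix n n ℝ) = U * diagonal (fun i => c * d i - s) * Uᵀ := by
    have : diagonal (fun i => c * d i - s) = c • diagonal d - s • (1 : Matrix n n ℝ) := by
      ext i j
      by_cases hij : i = j
      · subst hij; simp
      · simp [hij]
    rw [this, mul_sub, sub_mul, mul_smul_comm, smul_mul_assoc, mul_smul_comm, smul_mul_assoc, ← hAU,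
      mul_one, hU']
  refine ⟨c • A - s • 1, ⟨?_, ?_⟩, ?_⟩
  · exact (hA.1.smul c).sub (isSymm_one.smul s)
  · intro i j hij
    rw [← hA.2 i j hij]
    have hc : c ≠ 0 := div_ne_zero two_ne_zero hba
    simp [hij, hc]
  · have h2 : diagonal (fun i => c * d i - s) * diagonal (fun i => c * d i - s) = 1 := by
      rw [diagonal_mul_diagonal, ← diagonal_one]
      congr 1
      ext i
      simp only [c, s]
      rcases hd i with h | h <;> rw [h] <;> field_simp <;> ring
    rw [hA']
    calc _ = U * (diagonal (fun i => c * d i - s) * ((Uᵀ * U) * diagonal (fun i => c * d i - s))) * Uᵀ := by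
          simp only [mul_assoc]
      _ = 1 := by rw [hU, one_mul, h2, mul_one, hU']

lemma sum_sq_left {α β : Type*} [Fintype α] [Fintype β] [DecidableEq α] {f : α → ℝ}
    {M : Matrix α β ℝ} (h : M * Mᵀ = diagonal (fun x => 1 - f x ^ 2)) (x : α) :
    ∑ y, M x y ^ 2 = 1 - f x ^ 2 := by
  have := congrFun (congrFun h x) x
  rw [Matrix.mul_apply, diagonal_apply_eq] at this
  rw [← this]
  exact Finset.sum_congr rfl fun y _ => by rw [transpose_apply, sq]

lemma M_facts {α β : Type*} [Fintype α] [Fintype β] [DecidableEq α] [DecidableEq β]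
    (f : α → ℝ) (g : β → ℝ) (M : Matrix α β ℝ)
    (h1 : M * Mᵀ = diagonal (fun x => 1 - f x ^ 2))
    (h2 : Mᵀ * M = diagonal (fun y => 1 - g y ^ 2))
    (h3 : diagonal f * M = M * diagonal g) :
    (∀ x, |f x| ≤ 1) ∧ (∀ y, |g y| ≤ 1) ∧ (∀ x y, M x y ≠ 0 → f x = g y ∧ |f x| < 1) ∧
    ∀ t : ℝ, |t| < 1 → (Finset.univ.filter (fun x => f x = t)).card =
      (Finset.univ.filter (fun y => g y = t)).card := by
  have s1 := sum_sq_left h1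
  have s2 := sum_sq_left (M := Mᵀ) (f := g) (by rw [transpose_transpose]; exact h2)
  simp only [transpose_apply] at s2
  have hfg : ∀ x y, M x y ≠ 0 → f x = g y := by
    intro x y h
    have := congrFun (congrFun h3 x) y
    rw [Matrix.diagonal_mul, Matrix.mul_diagonal, mul_comm] at this
    exact mul_left_cancel₀ h this
  refine ⟨?_, ?_, ?_, ?_⟩
  · intro x
    rw [← sq_le_one_iff_abs_le_one]
    have : 0 ≤ ∑ y, M x y ^ 2 := Finset.sum_nonneg fun _ _ => sq_nonneg _
    linarith [s1 x]
  · intro x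
    rw [← sq_le_one_iff_abs_le_one]
    have : 0 ≤ ∑ y, M y x ^ 2 := Finset.sum_nonneg fun _ _ => sq_nonneg _
    linarith [s2 x]
  · intro x y h
    refine ⟨hfg x y h, ?_⟩
    rw [← sq_lt_one_iff_abs_lt_one]
    have : M x y ^ 2 ≤ ∑ y, M x y ^ 2 :=
      Finset.single_le_sum (f := fun y => M x y ^ 2) (fun _ _ => sq_nonneg _) (Finset.mem_univ y)
    have : 0 < M x y ^ 2 := by positivity
    linarith [s1 x]
  · intro t ht
    have hpos : 0 < 1 - t ^ 2 := by
      have := (sq_lt_one_iff_abs_lt_one t).2 ht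
      linarith
    have e1 : ∑ x, ∑ y, (if f x = t then M x y ^ 2 else 0) =
        (Finset.univ.filter (fun x => f x = t)).card * (1 - t ^ 2) := by
      rw [Finset.card_filter, Nat.cast_sum, Finset.sum_mul]
      refine Finset.sum_congr rfl fun x _ => ?_
      by_cases h : f x = t
      · simp [h, s1]
      · simp [h]
    have e2 : ∑ y, ∑ x, (if g y = t then M x y ^ 2 else 0) =
        (Finset.univ.filter (fun x => g x = t)).card * (1 - t ^ 2) := by
      rw [Finset.card_filter, Nat.cast_sum, Finset.sum_mul]
      refine Finset.sum_congr rfl fun x _ => ?_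
      by_cases h : g x = t
      · simp [h, s2]
      · simp [h]
    have e3 : ∑ x, ∑ y, (if f x = t then M x y ^ 2 else 0) =
        ∑ y, ∑ x, (if g y = t then M x y ^ 2 else 0) := by
      rw [Finset.sum_comm]
      refine Finset.sum_congr rfl fun y _ => Finset.sum_congr rfl fun x _ => ?_
      by_cases h : M x y = 0
      · simp [h]
      · rw [hfg x y h]
    rw [e1, e2] at e3
    have := mul_right_cancel₀ hpos.ne' e3
    exact_mod_cast this

lemma oml_of {m r : ℕ} (G : SimpleGraph (Fin m)) (A : Matrix (Fin m) (Fin m) ℝ) (hA : inS G A)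
    (f : Fin m → ℝ) (hs : specMultiset A = Finset.univ.val.map f)
    (lam : Fin r → ℝ) (hlam : StrictMono lam) (hf : ∀ x, ∃ j, lam j = f x) :
    IsOrderedMultiplicityList G (fun j => (Finset.univ.filter (fun x => f x = lam j)).card) := by
  refine ⟨lam, hlam, A, hA, ?_⟩
  rw [hs]
  ext t
  rw [Multiset.count_map, Multiset.count_bind]
  change _ = ∑ b, Multiset.count t (Multiset.replicate _ (lam b))
  change (Finset.univ.filter (fun a => t = f a)).card = _
  simp only [Multiset.count_replicate]
  by_cases h : ∃ j, lam j = t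
  · obtain ⟨j, rfl⟩ := h
    rw [Finset.sum_eq_single j]
    · simp [eq_comm]
    · intro b _ hb
      rw [if_neg]
      exact fun h => hb (hlam.injective h)
    · simp
  · push Not at h
    rw [Finset.sum_eq_zero fun b _ => if_neg (h b), Finset.card_eq_zero, Finset.filter_eq_empty_iff]
    rintro x - rfl
    obtain ⟨j, hj⟩ := hf x
    exact h j hj

lemma sigma_blocks {ι : Type*} [DecidableEq ι] {α : ι → Type*} (G : ∀ i, SimpleGraph (α i))
    (B : Matrix (Σ i, α i) (Σ i, α i) ℝ) (hB : inS (sigmaGraph G) B) :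
    ∃ Bs : ∀ i, Matrix (α i) (α i) ℝ, (∀ i, inS (G i) (Bs i)) ∧ B = blockDiagonal' Bs := by
  refine ⟨fun i => of fun x y => B ⟨i, x⟩ ⟨i, y⟩, fun i => ⟨?_, ?_⟩, ?_⟩
  · ext x y
    exact hB.1.apply _ _
  · intro x y hxy
    rw [← sigma_adj]
    exact hB.2 _ _ (fun h => hxy (by simpa using h))
  · ext ⟨i, x⟩ ⟨j, y⟩
    by_cases hij : i = j
    · subst hij
      rw [blockDiagonal'_apply_eq]; rfl
    · rw [blockDiagonal'_apply_ne _ _ _ hij]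
      by_contra h
      exact sigma_not_adj G hij x y ((hB.2 _ _ (fun h => hij (congrArg Sigma.fst h))).1 h)

lemma exists_lam (S : Finset ℝ) (h1 : (1 : ℝ) ∈ S) (h0 : (0 : ℝ) ∈ S) (hn : (-1 : ℝ) ∈ S)
    (hS : ∀ t ∈ S, |t| ≤ 1) :
    ∃ r : ℕ, 3 ≤ r ∧ ∃ lam : Fin r → ℝ, StrictMono lam ∧ (∀ t ∈ S, ∃ j, lam j = t) ∧
      ∀ j, j ∈ interiorRows r ↔ |lam j| < 1 := by
  have hcard : 3 ≤ S.card := by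
    have : ({1, 0, -1} : Finset ℝ).card = 3 := by
      rw [Finset.card_eq_three]
      exact ⟨1, 0, -1, by norm_num, by norm_num, by norm_num, rfl⟩
    rw [← this]
    apply Finset.card_le_card
    intro t ht
    simp only [Finset.mem_insert, Finset.mem_singleton] at ht
    rcases ht with rfl | rfl | rfl <;> assumption
  have hsurj : ∀ t ∈ S, ∃ j, S.orderEmbOfFin rfl j = t := by
    intro t ht
    have : t ∈ Set.range (S.orderEmbOfFin rfl) := by
      rw [Finset.range_orderEmbOfFin]; exact ht
    exact this
  have hmono := (S.orderEmbOfFin rfl).strictMono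
  have hb : ∀ j, |S.orderEmbOfFin rfl j| ≤ 1 := fun j => hS _ (Finset.orderEmbOfFin_mem S rfl j)
  refine ⟨S.card, hcard, S.orderEmbOfFin rfl, hmono, hsurj, ?_⟩
  intro j
  simp only [interiorRows, Finset.mem_filter, Finset.mem_univ, true_and]
  constructor
  · rintro ⟨hj0, hj1⟩
    have a1 : S.orderEmbOfFin rfl ⟨0, by omega⟩ < S.orderEmbOfFin rfl j :=
      hmono (Fin.lt_def.2 (Nat.pos_of_ne_zero hj0))
    have a2 : S.orderEmbOfFin rfl j < S.orderEmbOfFin rfl ⟨S.card - 1, by omega⟩ :=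
      hmono (Fin.lt_def.2 (by have := j.2; simp only; omega))
    have b1 := abs_le.1 (hb ⟨0, by omega⟩)
    have b2 := abs_le.1 (hb ⟨S.card - 1, by omega⟩)
    rw [abs_lt]
    constructor <;> linarith
  · intro h
    rw [abs_lt] at h
    obtain ⟨jm, hjm⟩ := hsurj _ hn
    obtain ⟨jp, hjp⟩ := hsurj _ h1
    have c1 : jm < j := hmono.lt_iff_lt.1 (by rw [hjm]; exact h.1)
    have c2 : j < jp := hmono.lt_iff_lt.1 (by rw [hjp]; exact h.2)
    rw [Fin.lt_def] at c1 c2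
    have := jp.2
    omega

lemma forward (k l : ℕ) (m : Fin k → ℕ) (p : Fin l → ℕ) (hm : ∀ i, 1 ≤ m i) (hp : ∀ j, 1 ≤ p j)
    (G : ∀ i, SimpleGraph (Fin (m i))) (H : ∀ j, SimpleGraph (Fin (p j)))
    (h : qGraph (graphJoin (sigmaGraph G) (sigmaGraph H)) = 2) :
      ∃ r : ℕ, 3 ≤ r ∧ ∃ (V : Fin r → Fin k → ℕ) (W : Fin r → Fin l → ℕ),
        (∀ i, IsOrderedMultiplicityList (G i) (fun j => V j i)) ∧
        (∀ i, IsOrderedMultiplicityList (H i) (fun j => W j i)) ∧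
        Compatible V W := by
  obtain ⟨A, hA, hAA⟩ := exists_invol _ h
  obtain ⟨B, C, C', D, rfl⟩ : ∃ B C C' D, A = fromBlocks B C C' D :=
    ⟨_, _, _, _, (fromBlocks_toBlocks A).symm⟩
  have hsym := hA.1
  rw [isSymm_fromBlocks_iff] at hsym
  obtain ⟨hBs, hCC, -, hDs⟩ := hsym
  subst hCC
  have hB : inS (sigmaGraph G) B := ⟨hBs, fun x y hxy => by
    rw [← join_ll (sigmaGraph G) (sigmaGraph H)]
    exact hA.2 (Sum.inl x) (Sum.inl y) (fun h => hxy (Sum.inl_injective h))⟩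
  have hD : inS (sigmaGraph H) (-D) := neg_inS _ _ ⟨hDs, fun x y hxy => by
    rw [← join_rr (sigmaGraph G) (sigmaGraph H)]
    exact hA.2 (Sum.inr x) (Sum.inr y) (fun h => hxy (Sum.inr_injective h))⟩
  have hC : ∀ x y, C x y ≠ 0 := fun x y =>
    (hA.2 (Sum.inl x) (Sum.inr y) Sum.inl_ne_inr).2 (join_lr _ _ x y)
  rw [fromBlocks_multiply, ← fromBlocks_one, fromBlocks_inj] at hAA
  obtain ⟨r11, r12, -, r22⟩ := hAA
  obtain ⟨Bs, hBs, hBe⟩ := sigma_blocks G B hB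
  obtain ⟨Ds, hDs, hDe⟩ := sigma_blocks H (-D) hD
  choose f Ua hUa hBf hfs using fun a => spec_thm (Bs a) (hBs a).1
  choose g Ub hUb hDg hgs using fun b => spec_thm (Ds b) (hDs b).1
  set U := blockDiagonal' Ua with hU
  set U' := blockDiagonal' Ub with hU'
  have hUU : Uᵀ * U = 1 := block_orth Ua hUa
  have hUU' : U'ᵀ * U' = 1 := block_orth Ub hUb
  have hUU2 : U * Uᵀ = 1 := mul_eq_one_comm.1 hUU
  have hUU2' : U' * U'ᵀ = 1 := mul_eq_one_comm.1 hUU'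
  let F : (Σ a, Fin (m a)) → ℝ := fun q => f q.1 q.2
  let E : (Σ b, Fin (p b)) → ℝ := fun q => g q.1 q.2
  have hBU : B = U * diagonal F * Uᵀ := by
    rw [hBe, hU]
    simp only [F]
    rw [block_conj]
    congr 1; ext1 a; exact hBf a
  have hDU : D = -(U' * diagonal E * U'ᵀ) := by
    rw [eq_neg_iff_add_eq_zero, ← neg_eq_iff_add_eq_zero, hDe, hU']
    simp only [E]
    rw [block_conj]
    congr 1; ext1 a; exact hDg a
  obtain ⟨M, hM⟩ : ∃ M, M = Uᵀ * C * U' := ⟨_, rfl⟩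
  have hCM : C = U * M * U'ᵀ := by
    have : U * M * U'ᵀ = (U * Uᵀ) * C * (U' * U'ᵀ) := by
      rw [hM]; simp only [Matrix.mul_assoc]
    rw [this, hUU2, hUU2', Matrix.one_mul, Matrix.mul_one]
  have hcan : ∀ {κ : Type} (X : Matrix (Σ a, Fin (m a)) κ ℝ), Uᵀ * (U * X) = X := fun X => by
    rw [← Matrix.mul_assoc, hUU, Matrix.one_mul]
  have hcan' : ∀ {κ : Type} (X : Matrix (Σ b, Fin (p b)) κ ℝ), U'ᵀ * (U' * X) = X := fun X => by
    rw [← Matrix.mul_assoc, hUU', Matrix.one_mul]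
  have q1 : M * Mᵀ = diagonal (fun x => 1 - F x ^ 2) := by
    have : Uᵀ * (B * B + C * Cᵀ) * U = diagonal F * diagonal F + M * Mᵀ := by
      rw [hBU, hCM]
      simp only [transpose_mul, transpose_transpose, Matrix.mul_assoc, hcan, hcan', Matrix.mul_add,
        Matrix.add_mul, hUU, Matrix.mul_one]
    rw [r11, Matrix.mul_one, hUU, diagonal_mul_diagonal] at this
    rw [← sub_eq_iff_eq_add'.2 this, ← diagonal_one, diagonal_sub]
    congr 1; ext x; simp [sq]
  have q2 : Mᵀ * M = diagonal (fun x => 1 - E x ^ 2) := by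
    have : U'ᵀ * (Cᵀ * C + D * D) * U' = Mᵀ * M + diagonal E * diagonal E := by
      rw [hDU, hCM]
      simp only [transpose_mul, transpose_transpose, Matrix.mul_assoc, hcan, hcan', Matrix.mul_add,
        Matrix.add_mul, hUU', Matrix.mul_one, Matrix.mul_neg, Matrix.neg_mul, neg_neg]
    rw [r22, Matrix.mul_one, hUU', diagonal_mul_diagonal] at this
    rw [← sub_eq_iff_eq_add.2 this, ← diagonal_one, diagonal_sub]
    congr 1; ext x; simp [sq]
  have q3 : diagonal F * M = M * diagonal E := by
    have : Uᵀ * (B * C + C * D) * U' = diagonal F * M - M * diagonal E := by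
      rw [hDU, hCM, hBU]
      simp only [Matrix.mul_assoc, hcan, hcan', Matrix.mul_add,
        Matrix.add_mul, hUU', Matrix.mul_one, Matrix.mul_neg, Matrix.neg_mul, sub_eq_add_neg]
    rw [r12, Matrix.mul_zero, Matrix.zero_mul] at this
    exact (sub_eq_zero.1 this.symm)
  obtain ⟨hF, hE, hnz, hcount⟩ := M_facts F E M q1 q2 q3
  have hx0 : ∀ a b, ∃ x y, M ⟨a, x⟩ ⟨b, y⟩ ≠ 0 := by
    intro a b
    by_contra hcon
    push Not at hcon
    apply hC ⟨a, ⟨0, hm a⟩⟩ ⟨b, ⟨0, hp b⟩⟩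
    have h1 : C = U * (U' * Mᵀ)ᵀ := by
      rw [hCM]
      simp only [transpose_mul, transpose_transpose, Matrix.mul_assoc]
    rw [h1, hU, blockDiagonal'_mul_apply']
    simp only [transpose_apply, hU', blockDiagonal'_mul_apply', hcon]
    simp
  obtain ⟨r, hr, lam, hlam, hsurj, hinter⟩ := exists_lam
    ({1, 0, -1} ∪ (Finset.univ.image F ∪ Finset.univ.image E)) (by simp) (by simp) (by simp) (by
      intro t ht
      simp only [Finset.mem_union, Finset.mem_insert, Finset.mem_singleton, Finset.mem_image,
        Finset.mem_univ, true_and] at ht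
      rcases ht with (rfl | rfl | rfl) | ⟨x, rfl⟩ | ⟨x, rfl⟩
      · simp
      · simp
      · simp
      · exact hF x
      · exact hE x)
  have hsF : ∀ a x, ∃ j, lam j = f a x := fun a x => hsurj _ (by
    refine Finset.mem_union_right _ (Finset.mem_union_left _ ?_)
    exact Finset.mem_image.2 ⟨⟨a, x⟩, Finset.mem_univ _, rfl⟩)
  have hsE : ∀ a x, ∃ j, lam j = g a x := fun a x => hsurj _ (by
    refine Finset.mem_union_right _ (Finset.mem_union_right _ ?_)
    exact Finset.mem_image.2 ⟨⟨a, x⟩, Finset.mem_univ _, rfl⟩)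
  refine ⟨r, hr, fun j a => (Finset.univ.filter (fun x => f a x = lam j)).card,
    fun j b => (Finset.univ.filter (fun y => g b y = lam j)).card,
    fun a => oml_of (G a) (Bs a) (hBs a) (f a) (hfs a) lam hlam (hsF a),
    fun b => oml_of (H b) (Ds b) (hDs b) (g b) (hgs b) lam hlam (hsE b), ?_, ?_⟩
  · intro j hj
    have := hcount (lam j) ((hinter j).1 hj)
    rw [← card_sigma_filter f, ← card_sigma_filter g]
    exact this
  · intro a b
    obtain ⟨x, y, hxy⟩ := hx0 a b
    obtain ⟨he, hlt⟩ := hnz _ _ hxy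
    obtain ⟨j, hj⟩ := hsF a x
    have he' : f a x = g b y := he
    have hlt' : |f a x| < 1 := hlt
    have hji : j ∈ interiorRows r := (hinter j).2 (by rw [hj]; exact hlt')
    intro h0
    rw [Finset.sum_eq_zero_iff] at h0
    have := h0 j hji
    rcases Nat.mul_eq_zero.1 this with h | h
    · rw [Finset.card_eq_zero, Finset.filter_eq_empty_iff] at h
      exact h (Finset.mem_univ x) hj.symm
    · rw [Finset.card_eq_zero, Finset.filter_eq_empty_iff] at h
      exact h (Finset.mem_univ y) (by rw [hj, he'])

/-- Corollary 3.2: if `G` and `H` are unions of paths or complete graphs,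
then `q(G ∨ H) = 2` iff `G` and `H` have a pair of compatible multiplicity matrices. -/
theorem statement6 (k l : ℕ) (hk : 1 ≤ k) (hl : 1 ≤ l)
    (m : Fin k → ℕ) (p : Fin l → ℕ) (hm : ∀ i, 1 ≤ m i) (hp : ∀ j, 1 ≤ p j)
    (G : ∀ i, SimpleGraph (Fin (m i))) (H : ∀ j, SimpleGraph (Fin (p j)))
    (hG : ∀ i, G i = SimpleGraph.pathGraph (m i) ∨ G i = ⊤)
    (hH : ∀ j, H j = SimpleGraph.pathGraph (p j) ∨ H j = ⊤) :
    qGraph (graphJoin (sigmaGraph G) (sigmaGraph H)) = 2 ↔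
      ∃ r : ℕ, 3 ≤ r ∧ ∃ (V : Fin r → Fin k → ℕ) (W : Fin r → Fin l → ℕ),
        (∀ i, IsOrderedMultiplicityList (G i) (fun j => V j i)) ∧
        (∀ i, IsOrderedMultiplicityList (H i) (fun j => W j i)) ∧
        Compatible V W := by
  constructor
  · exact forward k l m p hm hp G H
  · rintro ⟨r, hr, V, W, hV, hW, hc⟩
    exact backward k l hk hl m p hm hp G H hG hH r hr V W hV hW hc
end
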